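/- arXiv:1811.05257 — 3 statements merged into one kernel-verified Lean document; each statement's English description precedes it below -/
import Mathlib

section
/- Let K ⊂ L ⊂ M be a tower of finite extensions of ℚ_p such that M/K and L/K are Galois. Suppose M/L has ramification jumps t₁ < ... < t_n (in lower numbering), and L/K has a unique ramification jump t with t < t₁. Then the ramification jumps of M/K are exactly t, t₁, ..., t_n, and for every j ≥ t+1 the lower ramification group Gal(M/K)_j equals Gal(M/L)_j. -/
/-- The `ℤ_[p]`-algebra structure on a field `L` over `ℚ_[p]`. -/
noncomputable def padicIntAlgebra (p : ℕ) [Fact p.Prime] (L : Type*) [Field L]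
    [Algebra ℚ_[p] L] : Algebra ℤ_[p] L :=
  ((algebraMap ℚ_[p] L).comp (algebraMap ℤ_[p] ℚ_[p])).toAlgebra

/-- The ring of integers of a `p`-adic field `L`, i.e. the integral closure of `ℤ_[p]` in `L`. -/
noncomputable def ringOfInt (p : ℕ) [Fact p.Prime] (L : Type*) [Field L]
    [Algebra ℚ_[p] L] : Subring L :=
  letI := padicIntAlgebra p L
  (integralClosure ℤ_[p] L).toSubring

/-- The maximal ideal of the ring of integers of `L` (its Jacobson radical). -/
noncomputable def maxIdeal (p : ℕ) [Fact p.Prime] (L : Type*) [Field L]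
    [Algebra ℚ_[p] L] : Ideal (ringOfInt p L) :=
  (⊥ : Ideal (ringOfInt p L)).jacobson

/-- The `i`-th ramification group (in lower numbering) of `L/K`, as a subset of `Gal(L/K)`:
`σ ∈ G_i` iff `σ x - x ∈ 𝔭_L ^ (i+1)` for every `x` in the ring of integers of `L`. -/
noncomputable def ramSet (p : ℕ) [Fact p.Prime] (K L : Type*) [Field K] [Field L]
    [Algebra ℚ_[p] L] [Algebra K L] (i : ℕ) : Set (L ≃ₐ[K] L) :=
  {σ | ∀ x : ringOfInt p L, ∃ y ∈ maxIdeal p L ^ (i + 1), (y : L) = σ (x : L) - (x : L)}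

/-- `t` is a ramification jump of `L/K` if `G_t ≠ G_{t+1}`. -/
noncomputable def IsRamJump (p : ℕ) [Fact p.Prime] (K L : Type*) [Field K] [Field L]
    [Algebra ℚ_[p] L] [Algebra K L] (t : ℕ) : Prop :=
  ramSet p K L t ≠ ramSet p K L (t + 1)

/-- `L/K` has a unique ramification jump, equal to `t`. -/
noncomputable def HasUniqueRamJump (p : ℕ) [Fact p.Prime] (K L : Type*) [Field K] [Field L]
    [Algebra ℚ_[p] L] [Algebra K L] (t : ℕ) : Prop :=
  IsRamJump p K L t ∧ ∀ t', IsRamJump p K L t' → t' = t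

/-- Same as `HasUniqueRamJump`, with the `K`-algebra structure on `L` given by an
explicit ring homomorphism. -/
noncomputable def HasUniqueRamJumpHom (p : ℕ) [Fact p.Prime] (K L : Type*) [Field K] [Field L]
    [Algebra ℚ_[p] L] (f : K →+* L) (t : ℕ) : Prop :=
  letI := f.toAlgebra
  HasUniqueRamJump p K L t

/-- The absolute ramification index `e(L|ℚ_p)`, i.e. the valuation of `p` in `L`. -/
noncomputable def eAbs (p : ℕ) [Fact p.Prime] (L : Type*) [Field L] [Algebra ℚ_[p] L] : ℕ :=
  sSup {n : ℕ | Ideal.span {(p : ringOfInt p L)} ≤ maxIdeal p L ^ n}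

/-- The normalized valuation `v_L(x)` of an integral element `x` of `L`. -/
noncomputable def valInt (p : ℕ) [Fact p.Prime] (L : Type*) [Field L] [Algebra ℚ_[p] L]
    (x : L) : ℕ :=
  sSup {n : ℕ | ∃ y ∈ maxIdeal p L ^ n, (y : L) = x}


section Monogenic

open IsLocalRing

variable {A C : Type*} [CommRing A] [CommRing C] [Algebra A C]

/-- An algebra endomorphism moving a generator by an element of an ideal moves every element by an
element of that ideal. -/
theorem AlgHom.sub_mem_of_adjoin_eq_top {x : C} (hx : Algebra.adjoin A {x} = ⊤) (σ : C →ₐ[A] C)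
    {I : Ideal C} (h : σ x - x ∈ I) (c : C) : σ c - c ∈ I := by
  have hc : c ∈ Algebra.adjoin A {x} := hx ▸ Algebra.mem_top
  rw [Algebra.adjoin_singleton_eq_range_aeval] at hc
  obtain ⟨g, rfl⟩ := hc
  change σ (Polynomial.aeval x g) - Polynomial.aeval x g ∈ I
  rw [← Polynomial.aeval_algHom_apply]
  rw [← Polynomial.eval_map_algebraMap, ← Polynomial.eval_map_algebraMap]
  exact I.mem_of_dvd (Polynomial.sub_dvd_eval_sub _ _ _) h

variable [IsDomain C] [IsDiscreteValuationRing C]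

/-- In a discrete valuation ring with finite residue field of cardinality `q`, some `x` generates
the multiplicative group of the residue field and has `x ^ q - x` a uniformizer. -/
theorem IsLocalRing.exists_irreducible_pow_card_sub [Finite (ResidueField C)] :
    ∃ x : C, Irreducible (x ^ Nat.card (ResidueField C) - x) ∧
      ∀ c : C, c ∈ maximalIdeal C ∨ ∃ i : ℕ, c - x ^ i ∈ maximalIdeal C := by
  obtain ⟨ϖ, hϖ⟩ := IsDiscreteValuationRing.exists_irreducible C
  have hm := hϖ.maximalIdeal_eq
  set q := Nat.card (ResidueField C) with hq
  have hfrob (y : C) : y ^ q - y ∈ maximalIdeal C := by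
    rw [← residue_eq_zero_iff, map_sub, map_pow, hq]
    have := Fintype.ofFinite (ResidueField C)
    rw [Nat.card_eq_fintype_card, FiniteField.pow_card, sub_self]
  have hq0 : (q : C) ∈ maximalIdeal C := by
    have := Fintype.ofFinite (ResidueField C)
    rw [← residue_eq_zero_iff, map_natCast, hq, Nat.card_eq_fintype_card,
      FiniteField.cast_card_eq_zero]
  obtain ⟨g, hg⟩ := IsCyclic.exists_generator (α := (ResidueField C)ˣ)
  obtain ⟨u, hu⟩ := residue_surjective (g : ResidueField C)
  have hgen (x : C) (hx : residue C x = g) (c : C) :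
      c ∈ maximalIdeal C ∨ ∃ i : ℕ, c - x ^ i ∈ maximalIdeal C := by
    rcases eq_or_ne (residue C c) 0 with h | h
    · exact .inl ((residue_eq_zero_iff c).1 h)
    · obtain ⟨i, hi⟩ := mem_powers_iff_mem_zpowers.2 (hg (Units.mk0 _ h))
      refine .inr ⟨i, ?_⟩
      rw [← residue_eq_zero_iff, map_sub, map_pow, hx, sub_eq_zero]
      simpa using (congrArg Units.val hi).symm
  have hirr (y : C) (hy : y ∈ maximalIdeal C) (hy2 : y ∉ maximalIdeal C ^ 2) : Irreducible y := by
    rw [hm, Ideal.mem_span_singleton] at hy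
    obtain ⟨z, rfl⟩ := hy
    refine (associated_mul_unit_right ϖ z ?_).irreducible hϖ
    by_contra hz
    refine hy2 ?_
    rw [sq]
    exact Ideal.mul_mem_mul ((mem_maximalIdeal _).2 hϖ.not_isUnit) ((mem_maximalIdeal _).2 hz)
  by_cases h2 : u ^ q - u ∈ maximalIdeal C ^ 2
  · have hϖm : ϖ ∈ maximalIdeal C := (mem_maximalIdeal _).2 hϖ.not_isUnit
    refine ⟨u + ϖ, hirr _ (hfrob _) fun h ↦ ?_, hgen _ ?_⟩
    · have h1 : (u + ϖ) ^ q - u ^ q ∈ maximalIdeal C ^ 2 := by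
        obtain ⟨k, hk⟩ := Polynomial.binomExpansion (Polynomial.X ^ q : Polynomial C) u ϖ
        simp only [Polynomial.eval_pow, Polynomial.eval_X, Polynomial.derivative_X_pow,
          Polynomial.eval_mul, map_natCast, Polynomial.eval_natCast] at hk
        rw [hk, add_assoc, add_sub_cancel_left]
        refine add_mem ?_ (Ideal.mul_mem_left _ _ (Ideal.pow_mem_pow hϖm 2))
        rw [sq]
        exact Ideal.mul_mem_mul (Ideal.mul_mem_right _ _ hq0) hϖm
      have h3 : ϖ ∈ maximalIdeal C ^ 2 := by
        have := sub_mem (add_mem h1 h2) h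
        convert this using 1
        ring
      rw [hm, Ideal.span_singleton_pow, Ideal.mem_span_singleton] at h3
      have := (pow_dvd_pow_iff hϖ.ne_zero hϖ.not_isUnit (n := 2) (m := 1)).1 (by simpa using h3)
      omega
    · rw [map_add, hu, (residue_eq_zero_iff ϖ).2 hϖm, add_zero]
  · exact ⟨u, hirr _ (hfrob u) h2, hgen u hu⟩

/-- A discrete valuation ring with finite residue field that is finite over a local ring is
generated by one element. -/
theorem IsLocalRing.exists_adjoin_eq_top_of_finite_residueField [IsLocalRing A] [Module.Finite A C]
    [Finite (ResidueField C)] (hA : (maximalIdeal A).map (algebraMap A C) ≠ ⊥) :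
    ∃ x : C, Algebra.adjoin A {x} = ⊤ := by
  obtain ⟨x, hϖ, hx⟩ := exists_irreducible_pow_card_sub (C := C)
  set ϖ := x ^ Nat.card (ResidueField C) - x
  have hxS : x ∈ Algebra.adjoin A {x} := Algebra.self_mem_adjoin_singleton A x
  have key (n : ℕ) (c : C) : ∃ s ∈ Algebra.adjoin A {x}, c - s ∈ maximalIdeal C ^ n := by
    induction n with
    | zero => exact ⟨0, zero_mem _, by simp⟩
    | succ n ih =>
      obtain ⟨s, hs, h⟩ := ih
      have hϖS : ϖ ^ n ∈ Algebra.adjoin A {x} := pow_mem (sub_mem (pow_mem hxS _) hxS) n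
      rw [hϖ.maximalIdeal_eq, Ideal.span_singleton_pow, Ideal.mem_span_singleton] at h
      obtain ⟨d, hd⟩ := h
      have hϖm : ϖ ^ n ∈ maximalIdeal C ^ n :=
        Ideal.pow_mem_pow ((mem_maximalIdeal _).2 hϖ.not_isUnit) n
      rcases hx d with h | ⟨i, h⟩
      · refine ⟨s, hs, ?_⟩
        rw [hd, pow_succ]
        exact Ideal.mul_mem_mul hϖm h
      · refine ⟨s + ϖ ^ n * x ^ i, add_mem hs (mul_mem hϖS (pow_mem hxS i)), ?_⟩
        rw [← sub_sub, hd, ← mul_sub, pow_succ]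
        exact Ideal.mul_mem_mul hϖm h
  obtain ⟨n, hn⟩ := exists_maximalIdeal_pow_eq_of_principal C
    (IsPrincipalIdealRing.principal _) _ hA
  refine ⟨x, eq_top_iff.2 <| Submodule.le_of_le_smul_of_le_jacobson_bot
    (Module.finite_def.mp inferInstance) (maximalIdeal_le_jacobson ⊥)
    (?_ : ⊤ ≤ (Algebra.adjoin A {x}).toSubmodule ⊔ maximalIdeal A • ⊤)⟩
  intro c _
  obtain ⟨s, hs, h⟩ := key n c
  rw [Ideal.smul_top_eq_map, hn]
  exact Submodule.mem_sup.2 ⟨s, hs, c - s, h, by ring⟩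

end Monogenic

section Invariant

variable {A B C H : Type*} [CommRing A] [CommRing B] [CommRing C] [Algebra A B] [Algebra B C]
  [Algebra A C] [IsScalarTower A B C] [Group H] [Fintype H] [MulSemiringAction H C]

open Polynomial in
/-- If `I` contains all displacements `τ y - y`, then the extension of `I` contains the norm-like
product of the displacements `σ x - h • x`. -/
theorem prod_sub_smul_mem_map [Algebra.IsInvariant B C H] (σ : C →+* C) (τ : B →+* B)
    (hστ : ∀ b, σ (algebraMap B C b) = algebraMap B C (τ b)) {I : Ideal B}
    (hI : ∀ b, τ b - b ∈ I) (x : C) :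
    ∏ h : H, (σ x - h • x) ∈ I.map (algebraMap B C) := by
  obtain ⟨f, hf⟩ := (lifts_iff_ringHom_rangeS _).1
    (Algebra.IsInvariant.charpoly_mem_lifts B C H x)
  change f.map (algebraMap B C) = _ at hf
  have hev (c : C) : eval₂ (algebraMap B C) c f = ∏ h : H, (c - h • x) := by
    rw [← eval_map, hf, MulSemiringAction.charpoly_eq, eval_prod]
    simp
  have h0 : eval₂ (algebraMap B C) (σ x) (f.map τ) = 0 := by
    have hx : eval₂ (algebraMap B C) x f = 0 := by
      rw [← eval_map, hf, MulSemiringAction.eval_charpoly]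
    have := congrArg σ hx
    rw [hom_eval₂, map_zero] at this
    rw [eval₂_map, ← this]
    congr 1
    ext b
    exact (hστ b).symm
  rw [← hev, ← neg_mem_iff, ← zero_sub, ← h0, ← eval₂_sub, eval₂_eq_sum, sum_def]
  refine sum_mem fun i _ ↦ Ideal.mul_mem_right _ _ (Ideal.mem_map_of_mem _ ?_)
  simpa using hI (f.coeff i)

/-- An endomorphism acting trivially on the residue ring of `B` modulo the contraction of a prime
ideal `P` of `C` agrees with some `h : H` on `x` modulo `P`. -/
theorem exists_sub_smul_mem_of_isInvariant [Algebra.IsInvariant B C H] (σ : C →+* C) (τ : B →+* B)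
    (hστ : ∀ b, σ (algebraMap B C b) = algebraMap B C (τ b)) (P : Ideal C) [P.IsPrime]
    (hτ : ∀ b, τ b - b ∈ P.comap (algebraMap B C)) (x : C) : ∃ h : H, σ x - h • x ∈ P := by
  obtain ⟨h, -, hh⟩ := (Ideal.IsPrime.prod_mem_iff (p := P)).1 <|
    Ideal.map_le_iff_le_comap.2 le_rfl (prod_sub_smul_mem_map (H := H) σ τ hστ hτ x)
  exact ⟨h, hh⟩

open Polynomial in
/-- If `x` generates `C`, then displacements `τ y - y` are divisible by the norm-like product of the
displacements `σ x - h • x`. -/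
theorem prod_sub_smul_dvd_sub [IsDomain C] [FaithfulSMul H C] [SMulCommClass H B C] {x : C}
    (hx : Algebra.adjoin A {x} = ⊤) (σ : C →ₐ[A] C) (y : B) :
    ∏ h : H, (σ x - h • x) ∣ σ (algebraMap B C y) - algebraMap B C y := by
  have hy : algebraMap B C y ∈ Algebra.adjoin A {x} := hx ▸ Algebra.mem_top
  rw [Algebra.adjoin_singleton_eq_range_aeval] at hy
  obtain ⟨g, hg⟩ := hy
  change aeval x g = _ at hg
  have : SMulCommClass H A C := ⟨fun h a c ↦ by
    rw [← algebraMap_smul B a c, smul_comm, algebraMap_smul]⟩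
  have hinj : Function.Injective fun h : H ↦ h • x := by
    intro h₁ h₂ h
    refine FaithfulSMul.eq_of_smul_eq_smul (α := C) fun c ↦ ?_
    have := AlgHom.ext_of_adjoin_eq_top hx
      (φ₁ := MulSemiringAction.toAlgHom A C h₁) (φ₂ := MulSemiringAction.toAlgHom A C h₂)
      (by simpa [Set.EqOn] using h)
    exact DFunLike.congr_fun this c
  have hroot (h : H) : aeval (h • x) g = algebraMap B C y := by
    have := aeval_algHom_apply (MulSemiringAction.toAlgHom A C h) x g
    rw [hg] at this
    simpa [MulSemiringAction.toAlgHom_apply, smul_algebraMap] using this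
  set F : C[X] := g.map (algebraMap A C) - Polynomial.C (algebraMap B C y) with hF
  have hdvd : ∏ h : H, (X - Polynomial.C (h • x)) ∣ F := by
    rcases eq_or_ne F 0 with h0 | h0
    · exact h0 ▸ dvd_zero _
    have := (Multiset.prod_X_sub_C_dvd_iff_le_roots h0
      ((Finset.univ : Finset H).val.map fun h ↦ h • x)).2 <|
      (Multiset.le_iff_subset ((Multiset.nodup_map_iff_of_injective hinj).2 Finset.univ.nodup)).2
        fun c hc ↦ by
          obtain ⟨h, -, rfl⟩ := Multiset.mem_map.1 hc
          exact (mem_roots h0).2 (by simp [hF, hroot])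
    simpa [Multiset.map_map] using this
  have := eval_dvd (x := σ x) hdvd
  rw [eval_prod, hF, eval_sub, eval_C, eval_map_algebraMap, aeval_algHom_apply, hg] at this
  simpa using this

end Invariant

theorem Ideal.mem_inertia_iff_of_adjoin_eq_top {A C H : Type*} [CommRing A] [CommRing C]
    [Algebra A C] [Group H] [MulSemiringAction H C] [SMulCommClass H A C] {x : C}
    (hx : Algebra.adjoin A {x} = ⊤) {I : Ideal C} {h : H} : h ∈ I.inertia H ↔ h • x - x ∈ I :=
  ⟨fun hh ↦ hh x, fun hh ↦ (MulSemiringAction.toAlgHom A C h).sub_mem_of_adjoin_eq_top hx hh⟩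

section Tower

open IsLocalRing

variable {A B C H : Type*} [CommRing A] [CommRing B] [CommRing C] [Algebra A B] [Algebra B C]
  [Algebra A C] [IsScalarTower A B C] [Group H] [Finite H] [MulSemiringAction H C]
  [IsDomain B] [IsDomain C] [IsDiscreteValuationRing B] [IsDiscreteValuationRing C]
  [Module.Finite B C] [FaithfulSMul B C] [IsGaloisGroup H B C]

/-- The ramification index of `C` over `B` is the order of the inertia group. -/
theorem IsLocalRing.maximalIdeal_map_eq_pow_card_inertia [Finite (ResidueField B)] :
    (maximalIdeal B).map (algebraMap B C) =
      maximalIdeal C ^ Nat.card ((maximalIdeal C).inertia H) := by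
  have : Finite (maximalIdeal B).ResidueField :=
    have : Finite (B ⧸ maximalIdeal B) := ‹Finite (ResidueField B)›
    .of_surjective _ (Ideal.bijective_algebraMap_quotient_residueField (maximalIdeal B)).2
  have : Module.IsTorsionFree B C := inferInstance
  have hn : maximalIdeal B ≠ ⊥ := IsDiscreteValuationRing.not_a_field B
  have hmap : (maximalIdeal B).map (algebraMap B C) ≠ ⊥ := by
    rwa [Ne, Ideal.map_eq_bot_iff_of_injective (FaithfulSMul.algebraMap_injective B C)]
  obtain ⟨k, hk⟩ := exists_maximalIdeal_pow_eq_of_principal C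
    (IsPrincipalIdealRing.principal _) _ hmap
  have h1 : (maximalIdeal B).ramificationIdx' (maximalIdeal C) = k := by
    refine Ideal.ramificationIdx'_spec hk.le fun h ↦ ?_
    rw [hk] at h
    exact absurd h (Ideal.pow_right_strictAnti _ (IsDiscreteValuationRing.not_a_field C)
      (Ideal.IsPrime.ne_top inferInstance) k.lt_succ_self).not_ge
  rw [Ideal.card_inertia_eq_ramificationIdxIn (maximalIdeal B) (maximalIdeal C),
    Ideal.ramificationIdxIn_eq_ramificationIdx _ (maximalIdeal C) H,
    ← Ideal.ramificationIdx'_eq_ramificationIdx _ _ hn, h1, hk]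

theorem IsLocalRing.comap_pow_inertia [Finite (ResidueField B)] (s : ℕ) :
    (maximalIdeal C ^ (Nat.card ((maximalIdeal C).inertia H) * s)).comap (algebraMap B C) =
      maximalIdeal B ^ s := by
  have : Module.IsTorsionFree B C := inferInstance
  have : Module.FaithfullyFlat B C := Module.FaithfullyFlat.of_flat_of_isLocalHom
  rw [pow_mul, ← maximalIdeal_map_eq_pow_card_inertia (B := B) (H := H), ← Ideal.map_pow,
    Ideal.comap_map_eq_self_of_faithfullyFlat]

variable [Finite (ResidueField B)] {x : C} (hx : Algebra.adjoin A {x} = ⊤) {s : ℕ}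
  (hs : ∀ h ∈ (maximalIdeal C).inertia H, h • x - x ∈ maximalIdeal C ^ s)
include hx hs

/-- If the nontrivial lower ramification of `C` over `B` happens in depth at least `s`, then any
automorphism of depth at least `s` on `C` has depth at least `s` on `B`. -/
theorem sub_mem_pow_of_forall_inertia (σ : C →ₐ[A] C) (τ : B → B)
    (hστ : ∀ b, σ (algebraMap B C b) = algebraMap B C (τ b))
    (hσ : σ x - x ∈ maximalIdeal C ^ s) (y : B) : τ y - y ∈ maximalIdeal B ^ s := by
  classical
  have := Fintype.ofFinite H
  have := IsGaloisGroup.faithful B (B := C) (G := H)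
  have := IsGaloisGroup.commutes (G := H) (A := B) (B := C)
  rw [← comap_pow_inertia (C := C) (H := H), Ideal.mem_comap, map_sub, ← hστ]
  refine Ideal.mem_of_dvd _ (prod_sub_smul_dvd_sub (H := H) hx σ y) ?_
  rw [← Finset.prod_filter_mul_prod_filter_not _ (· ∈ (maximalIdeal C).inertia H)]
  refine Ideal.mul_mem_right _ _ ?_
  rw [mul_comm, pow_mul, Nat.card_eq_fintype_card, Fintype.card_subtype, ← Finset.prod_const]
  refine Ideal.prod_mem_prod fun h hh ↦ ?_
  rw [← sub_sub_sub_cancel_right _ _ x]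
  exact sub_mem hσ (hs h (Finset.mem_filter.1 hh).2)

/-- If the nontrivial lower ramification of `C` over `B` happens in depth at least `s`, then an
automorphism in the inertia group whose restriction to `B` has depth at least `s` also has depth at
least `s` on `C`. -/
theorem sub_mem_pow_of_restrict (σ : C →ₐ[A] C) (τ : B →+* B)
    (hστ : ∀ b, σ (algebraMap B C b) = algebraMap B C (τ b))
    (hτ : ∀ y, τ y - y ∈ maximalIdeal B ^ s) (hσ : σ x - x ∈ maximalIdeal C) :
    σ x - x ∈ maximalIdeal C ^ s := by
  classical
  have := Fintype.ofFinite H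
  have := IsGaloisGroup.isInvariant (G := H) (A := B) (B := C)
  have := IsGaloisGroup.commutes (G := H) (A := B) (B := C)
  have : SMulCommClass H A C := ⟨fun h a c ↦ by
    rw [← algebraMap_smul B a c, smul_comm, algebraMap_smul]⟩
  obtain ⟨ϖ, hϖ⟩ := IsDiscreteValuationRing.exists_irreducible C
  have hmem (n : ℕ) (c : C) : c ∈ maximalIdeal C ^ n ↔ ϖ ^ n ∣ c := by
    rw [hϖ.maximalIdeal_eq, Ideal.span_singleton_pow, Ideal.mem_span_singleton]
  by_contra hcon
  have hprod : ∏ h : H, (σ x - h • x) ∈ _ :=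
    prod_sub_smul_mem_map (H := H) (σ : C →+* C) τ hστ hτ x
  rw [Ideal.map_pow, maximalIdeal_map_eq_pow_card_inertia (H := H), ← pow_mul, hmem,
    pow_dvd_iff_le_emultiplicity, Finset.emultiplicity_prod hϖ.prime] at hprod
  have hlt (h : H) (hh : h ∈ (maximalIdeal C).inertia H) :
      emultiplicity ϖ (σ x - h • x) < s := by
    rw [emultiplicity_lt_iff_not_dvd, ← hmem]
    intro h'
    exact hcon (by simpa using add_mem h' (hs h hh))
  have hzero (h : H) (hh : h ∉ (maximalIdeal C).inertia H) :
      emultiplicity ϖ (σ x - h • x) = 0 := by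
    rw [emultiplicity_eq_zero, ← Ideal.mem_span_singleton, ← hϖ.maximalIdeal_eq]
    intro h'
    exact hh ((Ideal.mem_inertia_iff_of_adjoin_eq_top hx).2 (by simpa using sub_mem hσ h'))
  rw [← Finset.sum_filter_add_sum_filter_not _ (· ∈ (maximalIdeal C).inertia H),
    Finset.sum_eq_zero (s := Finset.filter (· ∉ _) _)
      fun h hh ↦ hzero h (Finset.mem_filter.1 hh).2, add_zero] at hprod
  have hs0 : s ≠ 0 := by
    rintro rfl
    simp at hcon
  have hle : ∑ h with h ∈ (maximalIdeal C).inertia H, emultiplicity ϖ (σ x - h • x) ≤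
      ∑ h : H with h ∈ (maximalIdeal C).inertia H, ((s - 1 : ℕ) : ℕ∞) :=
    Finset.sum_le_sum fun h hh ↦ Order.le_of_lt_add_one <| by
      have := hlt h (Finset.mem_filter.1 hh).2
      exact_mod_cast (Nat.sub_add_cancel (Nat.one_le_iff_ne_zero.2 hs0)).symm ▸ this
  have := hprod.trans hle
  rw [Finset.sum_const, ← Fintype.card_subtype, ← Nat.card_eq_fintype_card] at this
  have hc : 0 < Nat.card ((maximalIdeal C).inertia H) := Nat.card_pos
  rw [nsmul_eq_mul] at this
  norm_cast at this
  have := Nat.le_of_mul_le_mul_left this hc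
  omega

end Tower

section Padic

open IsLocalRing

variable (p : ℕ) [Fact p.Prime] {L : Type*} [Field L] [Algebra ℚ_[p] L]
  [FiniteDimensional ℚ_[p] L] [Algebra ℤ_[p] L] [IsScalarTower ℤ_[p] ℚ_[p] L]

omit [FiniteDimensional ℚ_[p] L] in
theorem isIntegral_padicInt_of_spectralNorm_le_one {x : L} (hx : IsIntegral ℚ_[p] x)
    (h : spectralNorm ℚ_[p] L x ≤ 1) : IsIntegral ℤ_[p] x := by
  have hm := minpoly.monic hx
  have hc := (spectralValue_le_one_iff hm).1 h
  have hl : minpoly ℚ_[p] x ∈ Polynomial.lifts (algebraMap ℤ_[p] ℚ_[p]) :=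
    (Polynomial.lifts_iff_coeff_lifts _).2 fun n ↦ ⟨⟨_, hc n⟩, rfl⟩
  obtain ⟨q, hq, -, hqm⟩ := Polynomial.lifts_and_degree_eq_and_monic hl hm
  refine ⟨q, hqm, ?_⟩
  rw [IsScalarTower.algebraMap_eq ℤ_[p] ℚ_[p] L, ← Polynomial.eval₂_map, hq]
  exact minpoly.aeval _ _

variable (L) (O : Type*) [CommRing O] [Algebra ℤ_[p] O] [Algebra O L]
  [IsScalarTower ℤ_[p] O L] [IsIntegralClosure O ℤ_[p] L]

include p L

omit [FiniteDimensional ℚ_[p] L] [IsScalarTower ℤ_[p] ℚ_[p] L] [Algebra ℚ_[p] L]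
  [IsScalarTower ℤ_[p] O L] [Algebra ℤ_[p] O] in
theorem IsIntegralClosure.isDomain_padicInt : IsDomain O :=
  (IsIntegralClosure.algebraMap_injective O ℤ_[p] L).isDomain _

variable [IsDomain O]

omit [FiniteDimensional ℚ_[p] L] [IsIntegralClosure O ℤ_[p] L] [IsDomain O] in
theorem faithfulSMul_padicInt : FaithfulSMul ℤ_[p] O := by
  refine (faithfulSMul_iff_algebraMap_injective _ _).2 (.of_comp (f := algebraMap O L) ?_)
  rw [← RingHom.coe_comp, ← IsScalarTower.algebraMap_eq,
    IsScalarTower.algebraMap_eq ℤ_[p] ℚ_[p] L]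
  exact (algebraMap ℚ_[p] L).injective.comp (IsFractionRing.injective ℤ_[p] ℚ_[p])

theorem IsIntegralClosure.valuationRing_padicInt : ValuationRing O := by
  have := IsIntegralClosure.isFractionRing_of_finite_extension ℤ_[p] ℚ_[p] L O
  refine (ValuationRing.iff_isInteger_or_isInteger O L).2 fun x ↦ ?_
  have hO {y : L} (hy : spectralNorm ℚ_[p] L y ≤ 1) : IsLocalization.IsInteger O y :=
    IsIntegralClosure.isIntegral_iff.1
      (isIntegral_padicInt_of_spectralNorm_le_one p (Algebra.IsIntegral.isIntegral y) hy)
  rcases le_total (spectralNorm ℚ_[p] L x) 1 with h | h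
  · exact .inl (hO h)
  · refine .inr (hO ?_)
    have := map_inv₀ (spectralMulAlgNorm ℚ_[p] L) x
    rw [spectralMulAlgNorm_def, spectralMulAlgNorm_def] at this
    rw [this]
    exact inv_le_one_of_one_le₀ h

theorem IsIntegralClosure.isDiscreteValuationRing_padicInt : IsDiscreteValuationRing O := by
  have := valuationRing_padicInt p L O
  have := IsIntegralClosure.isDedekindDomain ℤ_[p] ℚ_[p] L O
  have := faithfulSMul_padicInt p L O
  have := IsIntegralClosure.isIntegral_algebra ℤ_[p] L (A := O)
  refine ((IsDiscreteValuationRing.TFAE O fun hO ↦ ?_).out 0 2).2 ‹_›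
  exact IsDiscreteValuationRing.not_isField ℤ_[p] (isField_of_isIntegral_of_isField
    (FaithfulSMul.algebraMap_injective ℤ_[p] O) hO)

theorem IsIntegralClosure.finite_residueField_padicInt [IsLocalRing O] :
    Finite (ResidueField O) := by
  have := IsIntegralClosure.finite ℤ_[p] ℚ_[p] L O
  have := faithfulSMul_padicInt p L O
  have : Finite (ResidueField ℤ_[p]) := .of_equiv _ PadicInt.residueField.symm.toEquiv
  exact Module.finite_of_finite (ResidueField ℤ_[p])

theorem IsIntegralClosure.exists_adjoin_eq_top_padicInt [IsDiscreteValuationRing O] :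
    ∃ x : O, Algebra.adjoin ℤ_[p] {x} = ⊤ := by
  have := IsIntegralClosure.finite ℤ_[p] ℚ_[p] L O
  have := faithfulSMul_padicInt p L O
  have := finite_residueField_padicInt p L O
  refine exists_adjoin_eq_top_of_finite_residueField ?_
  rw [Ne, Ideal.map_eq_bot_iff_of_injective (FaithfulSMul.algebraMap_injective ℤ_[p] O)]
  exact IsDiscreteValuationRing.not_a_field ℤ_[p]

end Padic

section LowerRamification

open IsLocalRing

/-- The lower ramification groups with respect to a ring `O` with fraction field `L`, as subsets of
the Galois group of `L/K`. -/
def lowerRamificationSet (K : Type*) {L : Type*} [Field K] [Field L] [Algebra K L] (O : Type*)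
    [CommRing O] [Algebra O L] (i : ℕ) : Set (L ≃ₐ[K] L) :=
  {σ | ∀ x : O, ∃ y ∈ (⊥ : Ideal O).jacobson ^ (i + 1),
    algebraMap O L y = σ (algebraMap O L x) - algebraMap O L x}

variable (p : ℕ) [Fact p.Prime] {K L M : Type*} [Field K] [Field L] [Field M]
  [Algebra ℚ_[p] K] [Algebra ℚ_[p] L] [Algebra ℚ_[p] M] [Algebra K L] [Algebra L M] [Algebra K M]
  [IsScalarTower K L M] [IsScalarTower ℚ_[p] K L] [IsScalarTower ℚ_[p] L M]
  [IsScalarTower ℚ_[p] K M]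
  [FiniteDimensional ℚ_[p] L] [FiniteDimensional ℚ_[p] M]
  [Algebra ℤ_[p] L] [Algebra ℤ_[p] M] [IsScalarTower ℤ_[p] ℚ_[p] L] [IsScalarTower ℤ_[p] ℚ_[p] M]
  {B C : Type*} [CommRing B] [CommRing C]
  [Algebra ℤ_[p] B] [Algebra B L] [IsScalarTower ℤ_[p] B L] [IsIntegralClosure B ℤ_[p] L]
  [Algebra ℤ_[p] C] [Algebra C M] [IsScalarTower ℤ_[p] C M] [IsIntegralClosure C ℤ_[p] M]
  [Algebra B C] [Algebra B M] [IsScalarTower B C M] [IsScalarTower B L M]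

/-- The automorphism of the integral closure of `ℤ_[p]` induced by a field automorphism. -/
noncomputable def integralRestrict (O : Type*) [CommRing O]
    [Algebra ℤ_[p] O] [Algebra O L] [IsScalarTower ℤ_[p] O L] [IsIntegralClosure O ℤ_[p] L]
    (σ : L ≃ₐ[K] L) : O ≃ₐ[ℤ_[p]] O :=
  galRestrict ℤ_[p] ℚ_[p] L O (σ.restrictScalars ℚ_[p])

theorem algebraMap_integralRestrict (σ : L ≃ₐ[K] L) (b : B) :
    algebraMap B L (integralRestrict p B σ b) = σ (algebraMap B L b) :=
  algebraMap_galRestrict_apply ℤ_[p] (σ.restrictScalars ℚ_[p]) b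

theorem mem_lowerRamificationSet_iff [IsLocalRing B] {σ : L ≃ₐ[K] L} {i : ℕ} :
    σ ∈ lowerRamificationSet K B i ↔
      ∀ b : B, integralRestrict p B σ b - b ∈ maximalIdeal B ^ (i + 1) := by
  refine forall_congr' fun b ↦ ?_
  rw [jacobson_eq_maximalIdeal ⊥ bot_ne_top]
  have h : algebraMap B L (integralRestrict p B σ b - b) =
      σ (algebraMap B L b) - algebraMap B L b := by
    rw [map_sub, algebraMap_integralRestrict]
  refine ⟨?_, fun hb ↦ ⟨_, hb, h⟩⟩
  rintro ⟨y, hy, hyb⟩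
  rwa [← IsIntegralClosure.algebraMap_injective B ℤ_[p] L (hyb.trans h.symm)]

theorem mem_lowerRamificationSet_iff_of_adjoin_eq_top [IsLocalRing B] {x : B}
    (hx : Algebra.adjoin ℤ_[p] {x} = ⊤) {σ : L ≃ₐ[K] L} {i : ℕ} :
    σ ∈ lowerRamificationSet K B i ↔ integralRestrict p B σ x - x ∈ maximalIdeal B ^ (i + 1) := by
  rw [mem_lowerRamificationSet_iff p]
  exact ⟨fun h ↦ h x, (integralRestrict p B σ : B →ₐ[ℤ_[p]] B).sub_mem_of_adjoin_eq_top hx⟩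

include p in
theorem eq_one_of_forall_mem_lowerRamificationSet {σ : L ≃ₐ[K] L}
    (h : ∀ i, σ ∈ lowerRamificationSet K B i) : σ = 1 := by
  have := IsIntegralClosure.isDomain_padicInt p L B
  have := IsIntegralClosure.isDiscreteValuationRing_padicInt p L B
  have := IsIntegralClosure.isFractionRing_of_finite_extension ℤ_[p] ℚ_[p] L B
  have hB (b : B) : σ (algebraMap B L b) = algebraMap B L b := by
    have : integralRestrict p B σ b - b ∈ ⨅ i, maximalIdeal B ^ i :=
      Ideal.mem_iInf.2 fun i ↦ Ideal.pow_le_pow_right i.le_succ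
        ((mem_lowerRamificationSet_iff p).1 (h i) b)
    rw [Ideal.iInf_pow_eq_bot_of_isLocalRing _ (Ideal.IsPrime.ne_top inferInstance),
      Ideal.mem_bot, sub_eq_zero] at this
    rw [← algebraMap_integralRestrict p, this]
  ext l
  obtain ⟨a, b, -, rfl⟩ := IsFractionRing.div_surjective B l
  simp [hB]

section Tower

variable [Normal K L]

omit [IsScalarTower ℚ_[p] L M] in
theorem integralRestrict_algebraMap (σ : M ≃ₐ[K] M) (b : B) :
    integralRestrict p C σ (algebraMap B C b) =
      algebraMap B C (integralRestrict p B (σ.restrictNormal L) b) := by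
  apply IsIntegralClosure.algebraMap_injective C ℤ_[p] M
  rw [algebraMap_integralRestrict, ← IsScalarTower.algebraMap_apply,
    ← IsScalarTower.algebraMap_apply, IsScalarTower.algebraMap_apply B L M,
    IsScalarTower.algebraMap_apply B L M, algebraMap_integralRestrict,
    AlgEquiv.restrictNormal_commutes]

variable [MulSemiringAction (M ≃ₐ[L] M) C] [SMulDistribClass (M ≃ₐ[L] M) C M]

omit [FiniteDimensional ℚ_[p] L] [Algebra ℤ_[p] L] [IsScalarTower ℤ_[p] ℚ_[p] L] in
theorem integralRestrict_eq_smul (h : M ≃ₐ[L] M) (c : C) :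
    integralRestrict p C h c = h • c := by
  apply IsIntegralClosure.algebraMap_injective C ℤ_[p] M
  rw [algebraMap_integralRestrict, algebraMap.smul', AlgEquiv.smul_def]

variable [IsDomain B] [IsDomain C] [IsDiscreteValuationRing B] [IsDiscreteValuationRing C]
  [Module.Finite B C] [FaithfulSMul B C] [IsScalarTower ℤ_[p] B C] [IsGaloisGroup (M ≃ₐ[L] M) B C]

include p

omit [FiniteDimensional ℚ_[p] L] [Algebra ℤ_[p] L] [IsScalarTower ℤ_[p] ℚ_[p] L] in
theorem forall_mem_inertia_of_subset {s : ℕ} (x : C)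
    (hs : lowerRamificationSet (L := M) L C 0 ⊆ lowerRamificationSet L C s) :
    ∀ h ∈ (maximalIdeal C).inertia (M ≃ₐ[L] M), h • x - x ∈ maximalIdeal C ^ (s + 1) := by
  intro h hh
  rw [← integralRestrict_eq_smul p]
  refine (mem_lowerRamificationSet_iff p).1 (hs ((mem_lowerRamificationSet_iff p).2 fun c ↦ ?_)) x
  rw [integralRestrict_eq_smul, zero_add, pow_one]
  exact hh c

theorem restrictNormal_mem_lowerRamificationSet {s : ℕ}
    (hs : lowerRamificationSet (L := M) L C 0 ⊆ lowerRamificationSet L C s)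
    {σ : M ≃ₐ[K] M} (hσ : σ ∈ lowerRamificationSet K C s) :
    σ.restrictNormal L ∈ lowerRamificationSet K B s := by
  have := FiniteDimensional.right ℚ_[p] L M
  have := IsIntegralClosure.finite_residueField_padicInt p L B
  obtain ⟨x, hx⟩ := IsIntegralClosure.exists_adjoin_eq_top_padicInt p M C
  exact (mem_lowerRamificationSet_iff p).2 <|
    sub_mem_pow_of_forall_inertia (H := M ≃ₐ[L] M) hx (forall_mem_inertia_of_subset p x hs)
      (integralRestrict p C σ : C →ₐ[ℤ_[p]] C) _ (integralRestrict_algebraMap p σ)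
      ((mem_lowerRamificationSet_iff p).1 hσ x)

theorem mem_lowerRamificationSet_of_restrictNormal {s : ℕ}
    (hs : lowerRamificationSet (L := M) L C 0 ⊆ lowerRamificationSet L C s)
    {σ : M ≃ₐ[K] M} (hσ : σ ∈ lowerRamificationSet K C 0)
    (hτ : σ.restrictNormal L ∈ lowerRamificationSet K B s) : σ ∈ lowerRamificationSet K C s := by
  have := FiniteDimensional.right ℚ_[p] L M
  have := IsIntegralClosure.finite_residueField_padicInt p L B
  obtain ⟨x, hx⟩ := IsIntegralClosure.exists_adjoin_eq_top_padicInt p M C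
  refine (mem_lowerRamificationSet_iff_of_adjoin_eq_top p hx).2 <|
    sub_mem_pow_of_restrict (H := M ≃ₐ[L] M) hx (forall_mem_inertia_of_subset p x hs)
      (integralRestrict p C σ : C →ₐ[ℤ_[p]] C)
      (integralRestrict p B (σ.restrictNormal L) : B →+* B) (integralRestrict_algebraMap p σ)
      ((mem_lowerRamificationSet_iff p).1 hτ) ?_
  simpa using (mem_lowerRamificationSet_iff p).1 hσ x

omit [IsScalarTower ℤ_[p] B C] in
theorem exists_restrictNormal_eq_of_mem_lowerRamificationSet [Normal K M] {τ : L ≃ₐ[K] L}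
    (hτ : τ ∈ lowerRamificationSet K B 0) :
    ∃ σ ∈ lowerRamificationSet (L := M) K C 0, σ.restrictNormal L = τ := by
  have := FiniteDimensional.right ℚ_[p] L M
  have := Fintype.ofFinite (M ≃ₐ[L] M)
  have := IsGaloisGroup.isInvariant (G := M ≃ₐ[L] M) (A := B) (B := C)
  obtain ⟨x, hx⟩ := IsIntegralClosure.exists_adjoin_eq_top_padicInt p M C
  obtain ⟨σ, rfl⟩ := AlgEquiv.restrictNormalHom_surjective M τ
  change σ.restrictNormal L ∈ _ at hτ
  obtain ⟨h, hh⟩ := exists_sub_smul_mem_of_isInvariant (H := M ≃ₐ[L] M)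
    (integralRestrict p C σ : C →+* C) (integralRestrict p B (σ.restrictNormal L) : B →+* B)
    (integralRestrict_algebraMap p σ) (maximalIdeal C) (fun b ↦ by
      rw [← Ideal.under_def, ← Ideal.LiesOver.over (p := maximalIdeal B) (P := maximalIdeal C)]
      simpa using (mem_lowerRamificationSet_iff p).1 hτ b) x
  refine ⟨h⁻¹.restrictScalars K * σ, ?_, ?_⟩
  · have hx' : integralRestrict p C (h⁻¹.restrictScalars K * σ) x - x =
        integralRestrict p C h⁻¹ (integralRestrict p C σ x - h • x) := by
      apply IsIntegralClosure.algebraMap_injective C ℤ_[p] M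
      simp [algebraMap_integralRestrict, algebraMap.smul', AlgEquiv.aut_inv]
    rw [mem_lowerRamificationSet_iff_of_adjoin_eq_top p hx, hx', zero_add, pow_one]
    exact (map_mem_nonunits_iff (integralRestrict p C h⁻¹) _).2 hh
  · ext l
    apply (algebraMap L M).injective
    rw [AlgEquiv.restrictNormal_commutes, AlgEquiv.mul_apply,
      ← AlgEquiv.restrictNormal_commutes, AlgEquiv.restrictScalars_apply, AlgEquiv.commutes]
    rfl

end Tower

end LowerRamification

section RingOfInt

open IsLocalRing

variable (p : ℕ) [Fact p.Prime] {K L M : Type*} [Field K] [Field L] [Field M]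
  [Algebra ℚ_[p] K] [Algebra ℚ_[p] L] [Algebra ℚ_[p] M] [Algebra K L] [Algebra L M] [Algebra K M]

omit [Algebra ℚ_[p] K] in
theorem ramSet_antitone : Antitone (ramSet p K L) := fun i j hij σ hσ x ↦ by
  obtain ⟨y, hy, h⟩ := hσ x
  exact ⟨y, Ideal.pow_le_pow_right (by lia) hy, h⟩

omit [Algebra ℚ_[p] K] in
theorem ramSet_eq_of_forall_not_isRamJump {i j : ℕ} (hij : i ≤ j)
    (h : ∀ k, i ≤ k → k < j → ¬ IsRamJump p K L k) : ramSet p K L i = ramSet p K L j := by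
  induction j, hij using Nat.le_induction with
  | base => rfl
  | succ j hij ih =>
    rw [ih fun k hk hkj ↦ h k hk (hkj.trans j.lt_succ_self)]
    exact not_not.1 (h j hij j.lt_succ_self)

/-- The `ℤ_[p]`-algebra structure on the ring of integers. -/
@[reducible]
noncomputable def ringOfIntAlgebra (L : Type*) [Field L] [Algebra ℚ_[p] L] :
    Algebra ℤ_[p] (ringOfInt p L) :=
  letI := padicIntAlgebra p L
  (integralClosure ℤ_[p] L).algebra

theorem eq_one_of_forall_mem_ramSet [IsScalarTower ℚ_[p] K L] [FiniteDimensional ℚ_[p] L]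
    {σ : L ≃ₐ[K] L} (h : ∀ i, σ ∈ ramSet p K L i) : σ = 1 := by
  let : Algebra ℤ_[p] L := padicIntAlgebra p L
  let := ringOfIntAlgebra p L
  have : IsScalarTower ℤ_[p] ℚ_[p] L := .of_algebraMap_eq fun _ ↦ rfl
  have : IsScalarTower ℤ_[p] (ringOfInt p L) L := .of_algebraMap_eq fun _ ↦ rfl
  have : IsIntegralClosure (ringOfInt p L) ℤ_[p] L :=
    inferInstanceAs (IsIntegralClosure (integralClosure ℤ_[p] L) ℤ_[p] L)
  exact eq_one_of_forall_mem_lowerRamificationSet p (B := ringOfInt p L) h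

variable [IsScalarTower K L M] [IsScalarTower ℚ_[p] K L] [IsScalarTower ℚ_[p] L M]
  [FiniteDimensional ℚ_[p] M] [IsGalois K M] [IsGalois K L] [IsGalois L M]

theorem ramSet_tower :
    (∀ s, ramSet p L M 0 ⊆ ramSet p L M s → ∀ σ : M ≃ₐ[K] M,
      (σ ∈ ramSet p K M s → σ.restrictNormal L ∈ ramSet p K L s) ∧
      (σ ∈ ramSet p K M 0 → σ.restrictNormal L ∈ ramSet p K L s → σ ∈ ramSet p K M s)) ∧
    ∀ τ ∈ ramSet p K L 0, ∃ σ ∈ ramSet p K M 0, σ.restrictNormal L = τ := by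
  let : Algebra ℤ_[p] L := padicIntAlgebra p L
  let := ringOfIntAlgebra p L
  have : IsScalarTower ℤ_[p] ℚ_[p] L := .of_algebraMap_eq fun _ ↦ rfl
  have : IsScalarTower ℤ_[p] (ringOfInt p L) L := .of_algebraMap_eq fun _ ↦ rfl
  have : IsIntegralClosure (ringOfInt p L) ℤ_[p] L :=
    inferInstanceAs (IsIntegralClosure (integralClosure ℤ_[p] L) ℤ_[p] L)
  let : Algebra ℤ_[p] M := padicIntAlgebra p M
  let := ringOfIntAlgebra p M
  have : IsScalarTower ℤ_[p] ℚ_[p] M := .of_algebraMap_eq fun _ ↦ rfl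
  have : IsScalarTower ℤ_[p] (ringOfInt p M) M := .of_algebraMap_eq fun _ ↦ rfl
  have : IsIntegralClosure (ringOfInt p M) ℤ_[p] M :=
    inferInstanceAs (IsIntegralClosure (integralClosure ℤ_[p] M) ℤ_[p] M)
  have : IsScalarTower ℚ_[p] K M := .of_algebraMap_eq fun q ↦ by
    rw [IsScalarTower.algebraMap_apply ℚ_[p] L M, IsScalarTower.algebraMap_apply ℚ_[p] K L,
      ← IsScalarTower.algebraMap_apply K L M]
  have : FiniteDimensional ℚ_[p] L := .left ℚ_[p] L M
  have : FiniteDimensional L M := .right ℚ_[p] L M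
  have : IsScalarTower ℤ_[p] L M := .of_algebraMap_eq fun z ↦
    IsScalarTower.algebraMap_apply ℚ_[p] L M z
  have : IsScalarTower ℤ_[p] (ringOfInt p L) M := .of_algebraMap_eq fun z ↦
    IsScalarTower.algebraMap_apply ℤ_[p] L M z
  have := IsIntegralClosure.isDomain_padicInt p L (ringOfInt p L)
  have := IsIntegralClosure.isDomain_padicInt p M (ringOfInt p M)
  have := IsIntegralClosure.isDiscreteValuationRing_padicInt p L (ringOfInt p L)
  have := IsIntegralClosure.isDiscreteValuationRing_padicInt p M (ringOfInt p M)
  have := IsIntegralClosure.isIntegral_algebra ℤ_[p] L (A := ringOfInt p L)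
  let := (IsIntegralClosure.lift ℤ_[p] (ringOfInt p M) M (S := ringOfInt p L)).toAlgebra
  have : IsScalarTower (ringOfInt p L) (ringOfInt p M) M := .of_algebraMap_eq fun b ↦
    (IsIntegralClosure.algebraMap_lift ℤ_[p] (ringOfInt p M) M b).symm
  have : IsScalarTower ℤ_[p] (ringOfInt p L) (ringOfInt p M) := .of_algebraMap_eq fun z ↦
    (AlgHom.commutes _ z).symm
  have : Module.Finite ℤ_[p] (ringOfInt p M) := IsIntegralClosure.finite ℤ_[p] ℚ_[p] M _
  have : Module.Finite (ringOfInt p L) (ringOfInt p M) := .of_restrictScalars_finite ℤ_[p] _ _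
  have : FaithfulSMul (ringOfInt p L) (ringOfInt p M) := by
    refine (faithfulSMul_iff_algebraMap_injective _ _).2
      (.of_comp (f := algebraMap (ringOfInt p M) M) ?_)
    rw [← RingHom.coe_comp, ← IsScalarTower.algebraMap_eq]
    exact FaithfulSMul.algebraMap_injective _ _
  have : IsIntegralClosure (ringOfInt p M) (ringOfInt p L) M := .tower_top (R := ℤ_[p])
  have := IsIntegralClosure.isFractionRing_of_finite_extension ℤ_[p] ℚ_[p] L (ringOfInt p L)
  have := IsIntegralClosure.isFractionRing_of_finite_extension ℤ_[p] ℚ_[p] M (ringOfInt p M)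
  let := IsIntegralClosure.MulSemiringAction (ringOfInt p L) L M (ringOfInt p M)
  have : IsGaloisGroup (M ≃ₐ[L] M) (ringOfInt p L) (ringOfInt p M) :=
    .of_isFractionRing _ _ _ L M
  exact ⟨fun s hs σ ↦ ⟨fun h ↦ restrictNormal_mem_lowerRamificationSet p (C := ringOfInt p M) hs h,
    fun h h' ↦ mem_lowerRamificationSet_of_restrictNormal p (B := ringOfInt p L) hs h h'⟩,
    fun τ hτ ↦ exists_restrictNormal_eq_of_mem_lowerRamificationSet p (B := ringOfInt p L) hτ⟩

end RingOfInt

/-- Let `K ⊆ L ⊆ M` be a tower of finite extensions of `ℚ_p` with `M/K` and `L/K` Galois.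
If `M/L` has ramification jumps `t₁ < ... < t_n`, and `L/K` has a unique jump `t` with
`t < t₁`, then the jumps of `M/K` are exactly `t, t₁, ..., t_n`, and for every `j ≥ t + 1`
one has `Gal(M/K)_j = Gal(M/L)_j` (via restriction of scalars). -/
theorem jumps_of_tower (p : ℕ) [Fact p.Prime] (K L M : Type*) [Field K] [Field L] [Field M]
    [Algebra ℚ_[p] K] [Algebra ℚ_[p] L] [Algebra ℚ_[p] M]
    [Algebra K L] [Algebra L M] [Algebra K M] [IsScalarTower K L M]
    [IsScalarTower ℚ_[p] K L] [IsScalarTower ℚ_[p] L M]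
    [FiniteDimensional ℚ_[p] M]
    [IsGalois K M] [IsGalois K L] [IsGalois L M]
    (n : ℕ) (ts : Fin n → ℕ) (hts : StrictMono ts)
    (hML : ∀ j : ℕ, IsRamJump p L M j ↔ ∃ i, ts i = j)
    (t : ℕ) (ht : HasUniqueRamJump p K L t)
    (htlt : ∀ i, t < ts i) :
    (∀ j : ℕ, IsRamJump p K M j ↔ (j = t ∨ ∃ i, ts i = j)) ∧
      ∀ j : ℕ, t + 1 ≤ j →
        ramSet p K M j =
          (fun σ : M ≃ₐ[L] M => AlgEquiv.restrictScalars K σ) '' ramSet p L M j := by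
  obtain ⟨htj, htu⟩ := ht
  obtain ⟨hdown, hlift⟩ := ramSet_tower p (K := K) (L := L) (M := M)
  have : FiniteDimensional ℚ_[p] L := .left ℚ_[p] L M
  have hLM (s : ℕ) (hs : s ≤ t + 1) : ramSet p L M 0 ⊆ ramSet p L M s :=
    (ramSet_eq_of_forall_not_isRamJump p s.zero_le fun k _ hk h ↦ by
      obtain ⟨i, rfl⟩ := (hML k).1 h
      have := htlt i
      lia).subset
  have hKL0 : ramSet p K L 0 = ramSet p K L t :=
    ramSet_eq_of_forall_not_isRamJump p t.zero_le fun k _ hk h ↦ hk.ne (htu k h)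
  have hKL1 (τ : L ≃ₐ[K] L) (hτ : τ ∈ ramSet p K L (t + 1)) : τ = 1 := by
    refine eq_one_of_forall_mem_ramSet p fun i ↦ ?_
    rcases le_total i (t + 1) with hi | hi
    · exact ramSet_antitone p hi hτ
    · rwa [← ramSet_eq_of_forall_not_isRamJump p hi fun k hk _ h ↦ by have := htu k h; lia]
  have himage (j : ℕ) (hj : t + 1 ≤ j) : ramSet p K M j =
      (fun σ : M ≃ₐ[L] M => AlgEquiv.restrictScalars K σ) '' ramSet p L M j := by
    ext σ
    refine ⟨fun hσ ↦ ?_, ?_⟩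
    · have h1 := hKL1 _ ((hdown _ (hLM _ le_rfl) σ).1 (ramSet_antitone p hj hσ))
      have h2 (l : L) : σ (algebraMap L M l) = algebraMap L M l := by
        rw [← AlgEquiv.restrictNormal_commutes, h1, AlgEquiv.one_apply]
      exact ⟨AlgEquiv.ofRingEquiv (f := (σ : M ≃+* M)) h2, hσ, rfl⟩
    · rintro ⟨h, hh, rfl⟩
      exact hh
  have hlow (σ : M ≃ₐ[K] M) (h0 : σ ∈ ramSet p K M 0) : σ ∈ ramSet p K M t := by
    refine (hdown _ (hLM t (by lia)) σ).2 h0 ?_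
    rw [← hKL0]
    exact (hdown _ subset_rfl σ).1 h0
  refine ⟨fun j ↦ ?_, himage⟩
  rcases lt_trichotomy j t with hj | rfl | hj
  · refine iff_of_false (not_not.2 (Set.Subset.antisymm (fun σ hσ ↦ ?_)
      (ramSet_antitone p j.le_succ))) ?_
    · exact ramSet_antitone p hj (hlow σ (ramSet_antitone p j.zero_le hσ))
    · rintro (rfl | ⟨i, rfl⟩)
      · exact hj.false
      · exact hj.not_gt (htlt i)
  · refine iff_of_true (fun heq ↦ htj ?_) (.inl rfl)
    refine Set.Subset.antisymm (fun τ hτ ↦ ?_) (ramSet_antitone p j.le_succ)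
    obtain ⟨σ, hσ, rfl⟩ := hlift τ (ramSet_antitone p j.zero_le hτ)
    exact (hdown _ (hLM _ le_rfl) σ).1 (heq ▸ hlow σ hσ)
  · rw [or_iff_right hj.ne', ← hML, IsRamJump, himage j hj, himage (j + 1) (by lia)]
    exact (AlgEquiv.restrictScalars_injective K).image_injective.ne_iff
end

section
/- Let p be an odd prime, K a finite extension of ℚ_p, and α ∈ K \ K^p. If K(α^{1/p})/K is ramified, then K(α^{1/p^s})/K(α^{1/p^{s−1}}) is ramified for every s ≥ 1. -/
section Preliminaries

open Polynomial IsLocalRing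

theorem IsAdicComplete.of_linearEquiv {R M N : Type*} [CommRing R] [AddCommGroup M] [Module R M]
    [AddCommGroup N] [Module R N] (I : Ideal R) (e : M ≃ₗ[R] N) [IsAdicComplete I M] :
    IsAdicComplete I N := by
  rw [← AdicCompletion.of_bijective_iff]
  have hcomp : (AdicCompletion.of I N : N → AdicCompletion I N) =
      AdicCompletion.congr I e ∘ AdicCompletion.of I M ∘ e.symm := by
    funext x
    simp [AdicCompletion.congr_apply, AdicCompletion.map_of]
  rw [hcomp]
  exact (AdicCompletion.congr I e).bijective.comp
    ((AdicCompletion.of_bijective I M).comp e.symm.bijective)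

theorem isAdicComplete_of_finite {R M : Type*} [CommRing R] [IsNoetherianRing R] [AddCommGroup M]
    [Module R M] [Module.Finite R M] (I : Ideal R) [IsAdicComplete I R] : IsAdicComplete I M := by
  obtain ⟨n, f, hf⟩ := Module.Finite.exists_fin' R M
  let Q := (Fin n → R) ⧸ LinearMap.ker f
  suffices IsAdicComplete I Q from .of_linearEquiv I (f.quotKerEquivOfSurjective hf)
  rw [← AdicCompletion.of_bijective_iff]
  let e : R ≃ₗ[R] AdicCompletion I R :=
    LinearEquiv.ofBijective (AdicCompletion.of I R) (AdicCompletion.of_bijective I R)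
  have hcomp : (AdicCompletion.of I Q : Q → AdicCompletion I Q) =
      AdicCompletion.ofTensorProduct I Q ∘ (e.rTensor Q) ∘ (TensorProduct.lid R Q).symm := by
    funext x
    have h1 : e 1 = 1 := rfl
    simp [h1]
  rw [hcomp]
  exact (AdicCompletion.ofTensorProduct_bijective_of_finite_of_isNoetherian I Q).comp
    ((e.rTensor Q).bijective.comp (TensorProduct.lid R Q).symm.bijective)

theorem exists_pow_isIdempotentElem {M : Type*} [Monoid M] [Finite M] (y : M) :
    ∃ n, 0 < n ∧ IsIdempotentElem (y ^ n) := by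
  obtain ⟨i, j, hij, h⟩ : ∃ i j, i < j ∧ y ^ i = y ^ j := by
    obtain ⟨i, j, hne, h⟩ := Finite.exists_ne_map_eq_of_infinite (fun n : ℕ ↦ y ^ n)
    rcases hne.lt_or_gt with h' | h'
    exacts [⟨i, j, h', h⟩, ⟨j, i, h', h.symm⟩]
  obtain ⟨d, rfl⟩ := Nat.exists_eq_add_of_lt hij
  have step (m : ℕ) (hm : i ≤ m) (k : ℕ) : y ^ (m + k * (d + 1)) = y ^ m := by
    obtain ⟨m, rfl⟩ := Nat.exists_eq_add_of_le hm
    induction k with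
    | zero => simp
    | succ k ih =>
      rw [← ih, show i + m + (k + 1) * (d + 1) = (i + d + 1) + (m + k * (d + 1)) by ring, pow_add,
        ← h, ← pow_add, add_assoc i]
  refine ⟨(i + 1) * (d + 1), by positivity, ?_⟩
  rw [IsIdempotentElem, ← pow_add]
  exact step _ (by nlinarith) _

section FinitePadicIntAlgebra

variable {p : ℕ} [hp : Fact p.Prime] {B : Type*} [CommRing B] [Algebra ℤ_[p] B]
  [Module.Finite ℤ_[p] B]

theorem henselianRing_span_natCast : HenselianRing B (Ideal.span {(p : B)}) := by
  have h1 : IsAdicComplete (maximalIdeal ℤ_[p]) B := isAdicComplete_of_finite _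
  rw [← IsAdicComplete.map_algebraMap_iff (S := B), PadicInt.maximalIdeal_eq_span_p,
    Ideal.map_span, Set.image_singleton, map_natCast] at h1
  infer_instance

theorem finite_quotient_span_natCast : Finite (B ⧸ Ideal.span {(p : B)}) := by
  have : Finite (ℤ_[p] ⧸ maximalIdeal ℤ_[p]) :=
    Finite.of_equiv (ZMod p) (PadicInt.residueField (p := p)).symm.toEquiv
  have h1 : Ideal.span {(p : B)} = (maximalIdeal ℤ_[p]).map (algebraMap ℤ_[p] B) := by
    rw [PadicInt.maximalIdeal_eq_span_p, Ideal.map_span, Set.image_singleton, map_natCast]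
  rw [h1]
  exact Module.finite_of_finite (ℤ_[p] ⧸ maximalIdeal ℤ_[p])

include p in
theorem isLocalRing_of_finite_padicInt [IsDomain B] : IsLocalRing B := by
  have := henselianRing_span_natCast (p := p) (B := B)
  have := finite_quotient_span_natCast (p := p) (B := B)
  set I := Ideal.span {(p : B)}
  have hI : I ≤ Ideal.jacobson ⊥ := HenselianRing.jac
  refine IsLocalRing.of_isUnit_or_isUnit_one_sub_self fun x ↦ ?_
  obtain ⟨n, hn, hx⟩ := exists_pow_isIdempotentElem (Ideal.Quotient.mk I x)
  have hx0 : x ^ n * x ^ n - x ^ n ∈ I := by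
    rw [← Ideal.Quotient.eq]; simpa using hx.eq
  obtain ⟨e, he, hex⟩ := HenselianRing.is_henselian (I := I) (X ^ 2 - X : B[X])
    (by monicity!) (x ^ n) (by simpa [sq] using hx0) (by
      refine IsUnit.of_mul_eq_one (Ideal.Quotient.mk I (2 * x ^ n - 1)) ?_
      rw [← map_mul, ← map_one (Ideal.Quotient.mk I), Ideal.Quotient.eq]
      simp only [derivative_sub, derivative_X_pow, derivative_X, eval_sub, eval_mul, eval_C,
        eval_pow, eval_X, eval_one]
      convert I.mul_mem_left 4 hx0 using 1
      push_cast
      ring)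
  have he' : e * (e - 1) = 0 := by
    have : e ^ 2 - e = 0 := by simpa using he
    linear_combination this
  rcases mul_eq_zero.mp he' with h | h
  · right
    rw [h] at hex
    have h1 := Ideal.mem_jacobson_bot.mp (hI hex) 1
    have h2 : IsUnit (1 - x ^ n) := by convert h1 using 1; ring
    exact isUnit_of_dvd_unit (by simpa using sub_dvd_pow_sub_pow 1 x n) h2
  · left
    rw [sub_eq_zero.mp h] at hex
    have h1 := Ideal.mem_jacobson_bot.mp (hI hex) (-1)
    have h2 : IsUnit (x ^ n) := by convert h1 using 1; ring
    exact (isUnit_pow_iff hn.ne').mp h2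

variable (p B) in
/-- A lift to `B` of a generator of the multiplicative group of the residue field, of finite order
prime to `p`. -/
theorem exists_pow_eq_one_and_residue_generator [IsDomain B] [IsLocalRing B]
    (hpB : (p : B) ∈ maximalIdeal B) :
    ∃ (ω : B) (m : ℕ), 0 < m ∧ ¬ p ∣ m ∧ ω ^ m = 1 ∧
      ∀ x : B, x ∈ maximalIdeal B ∨ ∃ n : ℕ, x - ω ^ n ∈ maximalIdeal B := by
  have := henselianRing_span_natCast (p := p) (B := B)
  have := finite_quotient_span_natCast (p := p) (B := B)
  set I := Ideal.span {(p : B)}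
  have hIm : I ≤ maximalIdeal B := by simpa [I, Ideal.span_le] using hpB
  have : Finite (ResidueField B) :=
    Finite.of_surjective (Ideal.Quotient.factor hIm) (Ideal.Quotient.factor_surjective hIm)
  obtain ⟨g, hg⟩ := IsCyclic.exists_generator (α := (ResidueField B)ˣ)
  have : CharP (ResidueField B) p := by
    refine (CharP.charP_iff_prime_eq_zero hp.out).mpr ?_
    simpa using (residue_eq_zero_iff (p : B)).mpr hpB
  obtain ⟨u, hu⟩ := residue_surjective (g : ResidueField B)
  have hu_unit : IsUnit u := by
    rw [← notMem_maximalIdeal, ← residue_eq_zero_iff, hu]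
    exact g.ne_zero
  set N := orderOf (Ideal.Quotient.mk I u)
  have hN : N ≠ 0 := by
    obtain ⟨v, hv⟩ := hu_unit.map (Ideal.Quotient.mk I)
    have := orderOf_pos v
    rw [← orderOf_units, hv] at this
    exact this.ne'
  obtain ⟨a, m, hpm, hNm⟩ := Nat.exists_eq_pow_mul_and_not_dvd hN p hp.out.ne_one
  have hm : m ≠ 0 := by rintro rfl; simp at hpm
  have hm_unit : IsUnit (m : B) := by
    rw [← notMem_maximalIdeal, ← residue_eq_zero_iff, map_natCast, CharP.cast_eq_zero_iff _ p]
    exact hpm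
  obtain ⟨ω, hω, hωu⟩ := HenselianRing.is_henselian (I := I) (X ^ m - 1 : B[X])
    (monic_X_pow_sub_C 1 hm) (u ^ p ^ a) (by
      rw [← Ideal.Quotient.eq_zero_iff_mem]
      simp only [eval_sub, eval_pow, eval_X, eval_one, ← pow_mul, ← hNm, map_sub, map_pow, map_one]
      rw [pow_orderOf_eq_one, sub_self])
    (by
      refine IsUnit.map _ ?_
      simp only [derivative_sub, derivative_X_pow, derivative_one, sub_zero, eval_mul, eval_C,
        eval_pow, eval_X]
      exact hm_unit.mul ((hu_unit.pow _).pow _))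
  refine ⟨ω, m, hm.bot_lt, hpm, by simpa [sub_eq_zero] using hω, fun x ↦ ?_⟩
  refine or_iff_not_imp_left.mpr fun hx ↦ ?_
  have hx0 : residue B x ≠ 0 := by rwa [Ne, residue_eq_zero_iff]
  have hcop : (Nat.card (ResidueField B)ˣ).Coprime (p ^ a) := by
    have := Fintype.ofFinite (ResidueField B)
    obtain ⟨n, -, hn⟩ := FiniteField.card (ResidueField B) p
    classical
    rw [Nat.card_eq_fintype_card, Fintype.card_units, hn]
    refine Nat.Coprime.pow_right _ (((Nat.Prime.coprime_iff_not_dvd hp.out).mpr fun hd ↦ ?_).symm)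
    have h1 := Nat.sub_add_cancel (Nat.one_le_pow (n : ℕ) p hp.out.pos)
    exact hp.out.not_dvd_one ((Nat.dvd_add_right hd).mp (h1 ▸ dvd_pow_self p n.pos.ne'))
  obtain ⟨h, hh⟩ := (powCoprime hcop).surjective (Units.mk0 _ hx0)
  obtain ⟨k, rfl⟩ := mem_powers_iff_mem_zpowers.mpr (hg h)
  refine ⟨k, ?_⟩
  have hωg : residue B ω = (g : ResidueField B) ^ p ^ a := by
    rw [← hu, ← map_pow, ← sub_eq_zero, ← map_sub, residue_eq_zero_iff]
    exact hIm hωu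
  rw [← residue_eq_zero_iff, map_sub, map_pow, hωg, sub_eq_zero]
  have := congrArg Units.val hh
  simp only [powCoprime_apply, Units.val_mk0, Units.val_pow_eq_pow_val] at this
  rw [← this]
  exact pow_right_comm _ _ _

end FinitePadicIntAlgebra

section RamificationIndex

variable {A B : Type*} [CommRing A] [IsDomain A] [IsDiscreteValuationRing A]
  [CommRing B] [IsDomain B] [IsDiscreteValuationRing B]

theorem exists_eq_maximalIdeal_pow {I : Ideal A} (hI : I ≠ ⊥) : ∃ n, I = maximalIdeal A ^ n :=
  exists_maximalIdeal_pow_eq_of_principal A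
    (IsPrincipalIdealRing.principal _) I hI

theorem sSup_le_jacobson_pow_eq {I : Ideal A} {e : ℕ} (h : I = maximalIdeal A ^ e) :
    sSup {n : ℕ | I ≤ (⊥ : Ideal A).jacobson ^ n} = e := by
  have hset : {n : ℕ | I ≤ (⊥ : Ideal A).jacobson ^ n} = Set.Iic e := by
    ext n
    rw [Set.mem_ofPred_eq, jacobson_eq_maximalIdeal ⊥ bot_ne_top, h, Set.mem_Iic]
    exact (Ideal.pow_right_strictAnti _ (IsDiscreteValuationRing.not_a_field A)
      (maximalIdeal.isMaximal A).ne_top).le_iff_ge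
  rw [hset, csSup_Iic]

theorem exists_map_eq_pow_and_sSup_eq_mul [Algebra A B] [FaithfulSMul A B] {x : A} (hx : x ≠ 0) :
    ∃ k, (maximalIdeal A).map (algebraMap A B) = maximalIdeal B ^ k ∧
      sSup {n : ℕ | Ideal.span {algebraMap A B x} ≤ (⊥ : Ideal B).jacobson ^ n} =
        k * sSup {n : ℕ | Ideal.span {x} ≤ (⊥ : Ideal A).jacobson ^ n} := by
  have hinj := FaithfulSMul.algebraMap_injective A B
  obtain ⟨e, he⟩ := exists_eq_maximalIdeal_pow (I := Ideal.span {x}) (by simpa using hx)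
  obtain ⟨k, hk⟩ := exists_eq_maximalIdeal_pow (I := (maximalIdeal A).map (algebraMap A B))
    ((Ideal.map_eq_bot_iff_of_injective hinj).not.mpr (IsDiscreteValuationRing.not_a_field A))
  refine ⟨k, hk, ?_⟩
  rw [sSup_le_jacobson_pow_eq he, sSup_le_jacobson_pow_eq (e := k * e)]
  rw [← Set.image_singleton, ← Ideal.map_span, he, Ideal.map_pow, hk, pow_mul]

theorem sSup_le_jacobson_pow_ne_zero {x : A} (hx : x ≠ 0) (hxm : x ∈ maximalIdeal A) :
    sSup {n : ℕ | Ideal.span {x} ≤ (⊥ : Ideal A).jacobson ^ n} ≠ 0 := by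
  obtain ⟨e, he⟩ := exists_eq_maximalIdeal_pow (I := Ideal.span {x}) (by simpa using hx)
  rw [sSup_le_jacobson_pow_eq he]
  rintro rfl
  rw [pow_zero, Ideal.one_eq_top, Ideal.span_singleton_eq_top] at he
  exact hxm he

/-- A finite local extension of local rings with no ramification and trivial residue field
extension is surjective. -/
theorem algebraMap_surjective_of_map_maximalIdeal_eq {A B : Type*} [CommRing A] [CommRing B]
    [IsLocalRing A] [IsLocalRing B] [Algebra A B] [Module.Finite A B]
    (hm : (maximalIdeal A).map (algebraMap A B) = maximalIdeal B)
    (hres : ∀ x : B, ∃ y : A, x - algebraMap A B y ∈ maximalIdeal B) :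
    Function.Surjective (algebraMap A B) := by
  have h : (⊤ : Submodule A B) ≤ LinearMap.range (Algebra.linearMap A B) := by
    refine Submodule.le_of_le_smul_of_le_jacobson_bot (I := maximalIdeal A) Module.Finite.fg_top
      (jacobson_eq_maximalIdeal ⊥ bot_ne_top).ge fun x _ ↦ ?_
    obtain ⟨y, hy⟩ := hres x
    rw [Ideal.smul_top_eq_map, hm]
    exact Submodule.mem_sup.mpr ⟨_, ⟨y, rfl⟩, _, hy, by simp⟩
  exact fun x ↦ h trivial

/-- An extension of discrete valuation rings whose fraction field extension is generated by a
root of unity of order invertible in the ring is unramified. -/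
theorem map_maximalIdeal_eq_of_pow_eq_one (K L : Type*) [Field K] [Field L] [Algebra A B]
    [Algebra A K] [IsFractionRing A K] [Algebra B L] [IsFractionRing B L] [Algebra K L]
    [Algebra A L] [IsScalarTower A K L] [IsScalarTower A B L] [FiniteDimensional K L]
    [Algebra.IsSeparable K L] [IsIntegralClosure B A L] [Module.Finite A B] [FaithfulSMul A B]
    {m : ℕ} (hm : IsUnit (m : B)) {ω : B} (hω : ω ^ m = 1)
    (hgen : Algebra.adjoin K {algebraMap B L ω} = ⊤) :
    (maximalIdeal A).map (algebraMap A B) = maximalIdeal B := by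
  have hm0 : m ≠ 0 := by rintro rfl; simp at hm
  have hint : IsIntegral A ω := Algebra.IsIntegral.isIntegral ω
  have hdiff : differentIdeal A B = ⊤ := by
    refine Ideal.eq_top_of_isUnit_mem _
      (aeval_derivative_mem_differentIdeal A K L ω hgen) ?_
    obtain ⟨g, hg⟩ := minpoly.isIntegrallyClosed_dvd (R := A) (p := X ^ m - 1) hint
      (by simp [hω])
    have h1 := congrArg (fun f : A[X] ↦ aeval ω (derivative f)) hg
    simp only [derivative_mul, map_add, map_mul, minpoly.aeval, zero_mul, add_zero,
      derivative_sub, derivative_X_pow, derivative_one, sub_zero, map_natCast, map_pow,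
      aeval_X] at h1
    refine isUnit_of_mul_isUnit_left (y := aeval ω g) ?_
    rw [← h1]
    exact hm.mul ((IsUnit.of_pow_eq_one hω hm0).pow _)
  obtain ⟨k, hk⟩ := exists_eq_maximalIdeal_pow (I := (maximalIdeal A).map (algebraMap A B))
    ((Ideal.map_eq_bot_iff_of_injective (FaithfulSMul.algebraMap_injective A B)).not.mpr
      (IsDiscreteValuationRing.not_a_field A))
  have hk0 : k ≠ 0 := by
    rintro rfl
    have : IsLocalHom (algebraMap A B) := inferInstance
    have := ((local_hom_TFAE (algebraMap A B)).out 0 2).mp this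
    rw [hk, pow_zero, Ideal.one_eq_top, top_le_iff] at this
    exact (maximalIdeal.isMaximal B).ne_top this
  have hdvd := pow_sub_one_dvd_differentIdeal_aux A K L (maximalIdeal B) hk0
    (IsDiscreteValuationRing.not_a_field A) (dvd_of_eq hk.symm)
  rw [hdiff, Ideal.dvd_iff_le, top_le_iff] at hdvd
  have hk1 : k - 1 = 0 := by
    by_contra h
    exact (maximalIdeal.isMaximal B).ne_top (top_le_iff.mp (hdvd ▸ Ideal.pow_le_self h))
  rw [hk, show k = 1 by omega, pow_one]

end RamificationIndex

attribute [local instance] padicIntAlgebra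

section RingOfInt

variable (p : ℕ) [Fact p.Prime] (K L : Type*) [Field K] [Field L] [Algebra ℚ_[p] K]
  [Algebra ℚ_[p] L] [Algebra K L] [IsScalarTower ℚ_[p] K L]

noncomputable instance : Algebra ℤ_[p] (ringOfInt p L) :=
  inferInstanceAs (Algebra ℤ_[p] (integralClosure ℤ_[p] L))

instance : IsScalarTower ℤ_[p] ℚ_[p] L := .of_algebraMap_eq' rfl

instance : IsScalarTower ℤ_[p] (ringOfInt p L) L := .of_algebraMap_eq' rfl

instance : IsScalarTower ℤ_[p] K L := .of_algebraMap_eq fun x ↦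
  IsScalarTower.algebraMap_apply ℚ_[p] K L (algebraMap ℤ_[p] ℚ_[p] x)

instance : IsIntegralClosure (ringOfInt p L) ℤ_[p] L :=
  inferInstanceAs (IsIntegralClosure (integralClosure ℤ_[p] L) ℤ_[p] L)

theorem mem_ringOfInt {x : L} : x ∈ ringOfInt p L ↔ IsIntegral ℤ_[p] x := Iff.rfl

noncomputable instance : Algebra (ringOfInt p K) (ringOfInt p L) :=
  ((algebraMap K L).restrict (ringOfInt p K) (ringOfInt p L) fun _ hx ↦
    IsIntegral.map (IsScalarTower.toAlgHom ℤ_[p] K L) hx).toAlgebra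

instance : IsScalarTower (ringOfInt p K) (ringOfInt p L) L := .of_algebraMap_eq fun _ ↦ rfl

instance : IsScalarTower ℤ_[p] (ringOfInt p K) (ringOfInt p L) := .of_algebraMap_eq fun x ↦
  Subtype.ext (IsScalarTower.algebraMap_apply ℤ_[p] K L x)

instance : IsScalarTower ℤ_[p] (ringOfInt p K) L := .of_algebraMap_eq fun x ↦
  IsScalarTower.algebraMap_apply ℤ_[p] K L x

instance : FaithfulSMul (ringOfInt p K) (ringOfInt p L) :=
  (faithfulSMul_iff_algebraMap_injective _ _).mpr fun _ _ h ↦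
    Subtype.ext ((algebraMap K L).injective (congrArg Subtype.val h))

instance : Algebra.IsIntegral ℤ_[p] (ringOfInt p L) :=
  IsIntegralClosure.isIntegral_algebra ℤ_[p] L

theorem natCast_ringOfInt_ne_zero : (p : ringOfInt p L) ≠ 0 := by
  have : CharZero L := charZero_of_injective_algebraMap (algebraMap ℚ_[p] L).injective
  exact_mod_cast (Nat.Prime.ne_zero Fact.out : p ≠ 0)

instance : FaithfulSMul ℤ_[p] (ringOfInt p L) :=
  (faithfulSMul_iff_algebraMap_injective _ _).mpr fun _ _ h ↦
    IsFractionRing.injective ℤ_[p] ℚ_[p] ((algebraMap ℚ_[p] L).injective (congrArg Subtype.val h))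

variable [FiniteDimensional ℚ_[p] L]

instance : IsFractionRing (ringOfInt p L) L :=
  IsIntegralClosure.isFractionRing_of_finite_extension ℤ_[p] ℚ_[p] L (ringOfInt p L)

instance : IsDedekindDomain (ringOfInt p L) :=
  IsIntegralClosure.isDedekindDomain ℤ_[p] ℚ_[p] L (ringOfInt p L)

instance : Module.Finite ℤ_[p] (ringOfInt p L) :=
  IsIntegralClosure.finite ℤ_[p] ℚ_[p] L (ringOfInt p L)

instance : IsLocalRing (ringOfInt p L) := isLocalRing_of_finite_padicInt (p := p)

theorem natCast_mem_maximalIdeal_ringOfInt :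
    (p : ringOfInt p L) ∈ maximalIdeal (ringOfInt p L) := by
  rw [mem_maximalIdeal, mem_nonunits_iff, ← map_natCast (algebraMap ℤ_[p] (ringOfInt p L)),
    isUnit_map_iff]
  exact PadicInt.p_nonunit

instance : IsDiscreteValuationRing (ringOfInt p L) := by
  have hf : ¬ IsField (ringOfInt p L) := fun h ↦ by
    have := (isField_iff_maximalIdeal_eq.mp h).le (natCast_mem_maximalIdeal_ringOfInt p L)
    exact natCast_ringOfInt_ne_zero p L this
  have hd : IsDedekindDomain (ringOfInt p L) := inferInstance
  exact ((IsDiscreteValuationRing.TFAE (ringOfInt p L) hf).out 2 0).mp hd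

instance : IsIntegralClosure (ringOfInt p L) (ringOfInt p K) L :=
  .tower_top (R := ℤ_[p])

instance : Module.Finite (ringOfInt p K) (ringOfInt p L) :=
  .of_restrictScalars_finite ℤ_[p] _ _

theorem eAbs_ne_zero : eAbs p L ≠ 0 :=
  sSup_le_jacobson_pow_ne_zero (natCast_ringOfInt_ne_zero p L)
    (natCast_mem_maximalIdeal_ringOfInt p L)

variable [FiniteDimensional ℚ_[p] K]

theorem exists_map_eq_pow_and_eAbs_eq_mul :
    ∃ k, (maximalIdeal (ringOfInt p K)).map (algebraMap (ringOfInt p K) (ringOfInt p L)) =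
      maximalIdeal (ringOfInt p L) ^ k ∧ eAbs p L = k * eAbs p K := by
  have := exists_map_eq_pow_and_sSup_eq_mul (B := ringOfInt p L) (natCast_ringOfInt_ne_zero p K)
  rwa [map_natCast] at this

theorem eAbs_dvd_eAbs : eAbs p K ∣ eAbs p L := by
  obtain ⟨k, -, hk⟩ := exists_map_eq_pow_and_eAbs_eq_mul p K L
  exact ⟨k, hk.trans (mul_comm _ _)⟩

theorem algebraMap_surjective_of_eAbs_eq (h : eAbs p L = eAbs p K)
    (hres : ∀ x : ringOfInt p L, ∃ y : ringOfInt p K,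
      x - algebraMap (ringOfInt p K) (ringOfInt p L) y ∈ maximalIdeal (ringOfInt p L)) :
    Function.Surjective (algebraMap K L) := by
  obtain ⟨k, hk, hek⟩ := exists_map_eq_pow_and_eAbs_eq_mul p K L
  obtain rfl : k = 1 := by
    rw [h] at hek
    exact (Nat.eq_of_mul_eq_mul_right (eAbs_ne_zero p K).bot_lt (by rw [← hek, one_mul]))
  have hsurj := algebraMap_surjective_of_map_maximalIdeal_eq (hk.trans (pow_one _)) hres
  intro x
  obtain ⟨a, b, -, rfl⟩ := IsFractionRing.div_surjective (A := ringOfInt p L) x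
  obtain ⟨a, rfl⟩ := hsurj a
  obtain ⟨b, rfl⟩ := hsurj b
  exact ⟨a / b, map_div₀ _ _ _⟩

theorem eAbs_eq_of_pow_eq_one {m : ℕ} (hm : ¬p ∣ m) {ω : L} (hω : ω ^ m = 1)
    (hgen : Algebra.adjoin K {ω} = ⊤) : eAbs p L = eAbs p K := by
  obtain ⟨k, hk, hek⟩ := exists_map_eq_pow_and_eAbs_eq_mul p K L
  have hm0 : m ≠ 0 := by rintro rfl; simp at hm
  have hint : ω ∈ ringOfInt p L :=
    .of_pow (Nat.pos_of_ne_zero hm0) (by rw [hω]; exact isIntegral_one)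
  have hunit : IsUnit (m : ringOfInt p L) := by
    have := (PadicInt.isUnit_iff.mpr (PadicInt.norm_natCast_eq_one_iff.mpr
      ((Nat.Prime.coprime_iff_not_dvd Fact.out).mpr hm))).map (algebraMap ℤ_[p] (ringOfInt p L))
    rwa [map_natCast] at this
  have : CharZero K := charZero_of_injective_algebraMap (algebraMap ℚ_[p] K).injective
  have : FiniteDimensional K L := .of_restrictScalars_finite ℚ_[p] K L
  have h1 := map_maximalIdeal_eq_of_pow_eq_one (A := ringOfInt p K) K L hunit
    (ω := (⟨ω, hint⟩ : ringOfInt p L)) (Subtype.ext hω) hgen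
  obtain rfl : k = 1 := by
    have h2 : maximalIdeal (ringOfInt p L) ^ k = maximalIdeal (ringOfInt p L) ^ 1 := by
      rw [← hk, h1, pow_one]
    exact (Ideal.pow_right_strictAnti _ (IsDiscreteValuationRing.not_a_field _)
      (maximalIdeal.isMaximal _).ne_top).injective h2
  rw [hek, one_mul]

end RingOfInt

section Kummer

open IntermediateField

variable {K Ω : Type*} [Field K] [Field Ω] [Algebra K Ω] {p : ℕ}

theorem IntermediateField.finiteDimensional_of_le {F E : IntermediateField K Ω}
    [FiniteDimensional K E] (h : F ≤ E) : FiniteDimensional K F :=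
  .of_injective (inclusion h).toLinearMap (inclusion_injective h)

theorem minpoly_eq_X_pow_sub_C_of_prime_pow (hp : p.Prime) (hp2 : p ≠ 2) {α : K}
    (hα : ∀ b : K, b ^ p ≠ α) {n : ℕ} {b : Ω} (hb : b ^ p ^ n = algebraMap K Ω α) :
    minpoly K b = X ^ p ^ n - C α :=
  (minpoly.eq_of_irreducible_of_monic (X_pow_sub_C_irreducible_of_prime_pow hp hp2 n hα)
    (by simp [hb]) (monic_X_pow_sub_C α (pow_ne_zero _ hp.ne_zero))).symm

theorem finrank_adjoin_of_pow_prime_pow_eq (hp : p.Prime) (hp2 : p ≠ 2) {α : K}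
    (hα : ∀ b : K, b ^ p ≠ α) {n : ℕ} {b : Ω} (hb : b ^ p ^ n = algebraMap K Ω α) :
    Module.finrank K K⟮b⟯ = p ^ n := by
  have hmin := minpoly_eq_X_pow_sub_C_of_prime_pow hp hp2 hα hb
  have hint : IsIntegral K b := .of_pow (pow_pos hp.pos n) (hb ▸ isIntegral_algebraMap)
  rw [adjoin.finrank hint, hmin, natDegree_X_pow_sub_C]

/-- A nontrivial normal subextension of `K(α^{1/p^(n+1)})/K` contains `α^{1/p}`. -/
theorem eq_bot_or_pow_mem_of_normal (hp : p.Prime) (hp2 : p ≠ 2) {α : K}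
    (hα : ∀ b : K, b ^ p ≠ α) {n : ℕ} {b : Ω} (hb : b ^ p ^ (n + 1) = algebraMap K Ω α)
    {U : IntermediateField K Ω} (hU : U ≤ K⟮b⟯) [Normal K U] : U = ⊥ ∨ b ^ p ^ n ∈ U := by
  have hE := finrank_adjoin_of_pow_prime_pow_eq hp hp2 hα hb
  have hpos : 0 < p ^ (n + 1) := pow_pos hp.pos _
  have : FiniteDimensional K K⟮b⟯ := .of_finrank_pos (hE ▸ hpos)
  by_cases hαU : ∀ c : U, c ^ p ≠ algebraMap K U α
  · left
    have hbU : b ^ p ^ (n + 1) = algebraMap U Ω (algebraMap K U α) := hb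
    have hle : U⟮b⟯.restrictScalars K ≤ K⟮b⟯ :=
      (adjoin_simple_le_iff (K := extendScalars hU)).mpr (mem_adjoin_simple_self K b)
    have hdeg := finrank_le_of_le_right hle
    have hmul := Module.finrank_mul_finrank K U U⟮b⟯
    rw [finrank_adjoin_of_pow_prime_pow_eq hp hp2 hαU hbU] at hmul
    rw [hE] at hdeg
    have : FiniteDimensional K U := finiteDimensional_of_le hU
    have hdeg' : Module.finrank K U * p ^ (n + 1) ≤ 1 * p ^ (n + 1) := by
      rw [one_mul, hmul]; exact hdeg
    exact finrank_eq_one_iff.mp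
      ((Nat.le_of_mul_le_mul_right hdeg' hpos).antisymm Module.finrank_pos)
  · right
    push Not at hαU
    obtain ⟨c, hc⟩ := hαU
    have hc1 : c ^ p ^ 1 = algebraMap K U α := by rw [pow_one, hc]
    have hmin := minpoly_eq_X_pow_sub_C_of_prime_pow hp hp2 hα hc1
    have hspl := Normal.splits (F := K) inferInstance c
    have hroot : (((minpoly K c).map (algebraMap K U)).map (algebraMap U Ω)).IsRoot (b ^ p ^ n) := by
      simp [hmin, IsRoot, ← pow_mul, ← pow_succ, hb]
    obtain ⟨x, hx⟩ := hspl.mem_range_of_isRoot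
      (Polynomial.map_ne_zero (minpoly.ne_zero (Normal.isIntegral inferInstance c))) hroot
    exact hx ▸ x.2

end Kummer

section Unramified

open IntermediateField

variable (p : ℕ) [Fact p.Prime] {K Ω : Type*} [Field K] [Field Ω] [Algebra ℚ_[p] K]
  [Algebra K Ω] [Algebra ℚ_[p] Ω] [IsScalarTower ℚ_[p] K Ω]

theorem eq_of_le_of_eAbs_eq {M E : IntermediateField K Ω} [FiniteDimensional ℚ_[p] M]
    [FiniteDimensional ℚ_[p] E] (h : M ≤ E) (he : eAbs p M = eAbs p E)
    (hres : ∀ x : ringOfInt p E, ∃ y : ringOfInt p E, (y : Ω) ∈ M ∧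
      x - y ∈ maximalIdeal (ringOfInt p E)) : M = E := by
  let := (inclusion h).toRingHom.toAlgebra
  have : IsScalarTower ℚ_[p] M E := .of_algebraMap_eq fun _ ↦ rfl
  refine le_antisymm h fun x hx ↦ ?_
  have hsurj := algebraMap_surjective_of_eAbs_eq p M E he.symm fun x ↦ by
    obtain ⟨y, hyM, hy⟩ := hres x
    refine ⟨⟨⟨y, hyM⟩, ?_⟩, hy⟩
    have hy' := y.2
    rw [mem_ringOfInt] at hy' ⊢
    rwa [← isIntegral_algebraMap_iff (algebraMap M E).injective]
  obtain ⟨y, hy⟩ := hsurj ⟨x, hx⟩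
  obtain rfl : (y : Ω) = x := congrArg Subtype.val hy
  exact y.2

variable [FiniteDimensional ℚ_[p] K]

theorem eAbs_eq_of_le {M U : IntermediateField K Ω} [FiniteDimensional K U] (h : M ≤ U)
    (hU : eAbs p U = eAbs p K) : eAbs p M = eAbs p K := by
  have : FiniteDimensional ℚ_[p] U := .trans ℚ_[p] K U
  have : FiniteDimensional K M := finiteDimensional_of_le h
  have : FiniteDimensional ℚ_[p] M := .trans ℚ_[p] K M
  let := (inclusion h).toRingHom.toAlgebra
  have : IsScalarTower ℚ_[p] M U := .of_algebraMap_eq fun _ ↦ rfl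
  exact Nat.dvd_antisymm (hU ▸ eAbs_dvd_eAbs p M U) (eAbs_dvd_eAbs p K M)

/-- Every finite extension `E` of a `p`-adic field `K` contains a normal unramified extension `U`
of `K` over which it is totally ramified. -/
theorem exists_normal_eAbs_eq (E : IntermediateField K Ω) [FiniteDimensional K E] :
    ∃ U ≤ E, Normal K U ∧ eAbs p U = eAbs p K ∧
      ∀ M ≤ E, U ≤ M → eAbs p M = eAbs p E → M = E := by
  have : FiniteDimensional ℚ_[p] E := .trans ℚ_[p] K E
  obtain ⟨ω, m, hm0, hpm, hω, hgen⟩ := exists_pow_eq_one_and_residue_generator p (ringOfInt p E)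
    (natCast_mem_maximalIdeal_ringOfInt p E)
  have hωΩ : (ω : Ω) ^ m = 1 := congrArg (fun x : ringOfInt p E ↦ (x : Ω)) hω
  have hωint : IsIntegral K (ω : Ω) := .of_pow hm0 (hωΩ ▸ isIntegral_one)
  have hUE : K⟮(ω : Ω)⟯ ≤ E := adjoin_simple_le_iff.mpr (ω : E).2
  have : FiniteDimensional K K⟮(ω : Ω)⟯ :=
    adjoin.finiteDimensional hωint
  have : FiniteDimensional ℚ_[p] K⟮(ω : Ω)⟯ := .trans ℚ_[p] K _
  have hωU : (ω : Ω) ∈ K⟮(ω : Ω)⟯ := mem_adjoin_simple_self K _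
  refine ⟨K⟮(ω : Ω)⟯, hUE, ?_, ?_, fun M hM hUM he ↦ ?_⟩
  · have : CharZero K := charZero_of_injective_algebraMap (algebraMap ℚ_[p] K).injective
    have hfin : IsOfFinOrder (ω : Ω) := isOfFinOrder_iff_pow_eq_one.mpr ⟨m, hm0, hωΩ⟩
    have : NeZero (orderOf (ω : Ω)) := ⟨hfin.orderOf_pos.ne'⟩
    have := (IntermediateField.isCyclotomicExtension_singleton_iff_eq_adjoin
      _ K Ω K⟮(ω : Ω)⟯ (IsPrimitiveRoot.orderOf (ω : Ω))).mpr rfl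
    have := IsCyclotomicExtension.isGalois {orderOf (ω : Ω)} K K⟮(ω : Ω)⟯
    infer_instance
  · exact eAbs_eq_of_pow_eq_one p K K⟮(ω : Ω)⟯ hpm (ω := ⟨ω, hωU⟩) (Subtype.ext hωΩ)
      (adjoin.powerBasis hωint).adjoin_gen_eq_top
  · have := finiteDimensional_of_le hM
    have : FiniteDimensional ℚ_[p] M := .trans ℚ_[p] K M
    refine eq_of_le_of_eAbs_eq p hM he fun (x : ringOfInt p E) ↦ ?_
    rcases hgen x with h | ⟨n, h⟩
    · exact ⟨0, M.zero_mem, by simpa using h⟩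
    · exact ⟨ω ^ n, pow_mem (S := M) (hUM hωU) n, h⟩

end Unramified

end Preliminaries

/-- Let `p` be an odd prime, `K` a finite extension of `ℚ_p` and `α ∈ K \ K^p`, with
compatible `p`-power roots `a s` of `α` in an extension `Ω`, and `K_s = K(α^{1/p^s})`.
If `K(α^{1/p})/K` is ramified then every step `K_s/K_{s-1}` is ramified.
(Being ramified is expressed by the jump of the absolute ramification index.) -/
theorem steps_ramified (p : ℕ) [Fact p.Prime] (hp : p ≠ 2) (K Ω : Type*) [Field K] [Field Ω]
    [Algebra ℚ_[p] K] [Algebra K Ω] [Algebra ℚ_[p] Ω] [IsScalarTower ℚ_[p] K Ω]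
    [FiniteDimensional ℚ_[p] K]
    (α : K) (hα : ¬∃ b : K, b ^ p = α)
    (a : ℕ → Ω) (ha0 : a 0 = algebraMap K Ω α) (hap : ∀ s, a (s + 1) ^ p = a s)
    (Ks : ℕ → IntermediateField K Ω)
    (hKs : ∀ s, Ks s = IntermediateField.adjoin K {a s})
    (hram1 : eAbs p ↥(Ks 1) ≠ eAbs p ↥(Ks 0)) :
    ∀ s, eAbs p ↥(Ks (s + 1)) ≠ eAbs p ↥(Ks s) := by
  have hpp : p.Prime := Fact.out
  have hα' : ∀ b : K, b ^ p ≠ α := fun b hb ↦ hα ⟨b, hb⟩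
  have ha : ∀ s, a s ^ p ^ s = algebraMap K Ω α := by
    intro s
    induction s with
    | zero => simpa using ha0
    | succ s ih => rw [pow_succ', pow_mul, hap, ih]
  have haa : ∀ n s, a (s + n) ^ p ^ n = a s := by
    intro n
    induction n with
    | zero => simp
    | succ n ih => intro s; rw [pow_succ', pow_mul, ← add_assoc, hap, ih]
  have hrank : ∀ s, Module.finrank K (Ks s) = p ^ s := fun s ↦ by
    rw [hKs]
    exact finrank_adjoin_of_pow_prime_pow_eq hpp hp hα' (ha s)
  have hfin : ∀ s, FiniteDimensional K (Ks s) := fun s ↦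
    .of_finrank_pos (by rw [hrank]; exact pow_pos hpp.pos s)
  intro s he
  obtain ⟨U, hUE, hUn, hUe, hU⟩ := exists_normal_eAbs_eq p (Ks (s + 1))
  have hle : Ks s ≤ Ks (s + 1) := by
    rw [hKs s, hKs, IntermediateField.adjoin_simple_le_iff, ← hap s]
    exact pow_mem (IntermediateField.mem_adjoin_simple_self K _) p
  rw [hKs] at hUE
  rcases eq_bot_or_pow_mem_of_normal hpp hp hα' (ha (s + 1)) hUE with rfl | h
  · have h1 := hrank (s + 1)
    rw [← hU _ hle bot_le he.symm, hrank] at h1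
    exact absurd (Nat.pow_right_injective hpp.two_le h1) (by omega)
  · rw [add_comm, haa] at h
    have hle1 : Ks 1 ≤ U := by rwa [hKs, IntermediateField.adjoin_simple_le_iff]
    have hle0 : Ks 0 ≤ U := by
      rw [hKs, IntermediateField.adjoin_simple_le_iff, ha0]
      exact U.algebraMap_mem α
    have : FiniteDimensional K U := IntermediateField.finiteDimensional_of_le (hKs (s + 1) ▸ hUE)
    exact hram1 ((eAbs_eq_of_le p hle1 hUe).trans (eAbs_eq_of_le p hle0 hUe).symm)
end

section
/- Let K₁, K₂ be p-adic local fields with K = K₁ ∩ K₂, [K₁:K] = [K₂:K] = p, K₁/K and K₂/K Galois, K₁K₂/K totally ramified, and suppose each of K₁/K, K₂/K, K₁K₂/K₂, K₁K₂/K₁ has a unique ramification jump t₁, t₂, t₁', t₂' respectively, with t₁' < t₂'. Then t₁' = t₁ and t₂' = p·t₂ + (1−p)·t₁. -/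
section

open WithZero Polynomial

/-- `v` is the normalized (multiplicative) valuation of the `p`-adic field `L`. -/
structure IsNormalizedValuation (p : ℕ) [Fact p.Prime] (L : Type*) [Field L]
    [Algebra ℚ_[p] L] (v : Valuation L ℤᵐ⁰) : Prop where
  mem_ringOfInt_iff : ∀ x, x ∈ ringOfInt p L ↔ v x ≤ 1
  mem_maxIdeal_pow_iff : ∀ (n : ℕ) (y : ringOfInt p L),
    y ∈ maxIdeal p L ^ n ↔ v (y : L) ≤ exp (-(n : ℤ))
  exists_uniformizer : ∃ ϖ, v ϖ = exp (-1 : ℤ)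
  map_p_lt_one : v (p : L) < 1

theorem isIntegral_padicInt_iff_spectralNorm_le_one {p : ℕ} [Fact p.Prime] {L : Type*} [Field L]
    [Algebra ℚ_[p] L] [FiniteDimensional ℚ_[p] L] [Algebra ℤ_[p] L] [IsScalarTower ℤ_[p] ℚ_[p] L]
    (x : L) : IsIntegral ℤ_[p] x ↔ spectralNorm ℚ_[p] L x ≤ 1 := by
  have hx : IsIntegral ℚ_[p] x := Algebra.IsIntegral.isIntegral x
  rw [spectralNorm, spectralValue_le_one_iff (minpoly.monic hx)]
  constructor
  · intro h n
    rw [minpoly.isIntegrallyClosed_eq_field_fractions' ℚ_[p] h, coeff_map]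
    exact PadicInt.norm_le_one _
  · intro h
    have hl : minpoly ℚ_[p] x ∈ lifts (algebraMap ℤ_[p] ℚ_[p]) := by
      rw [lifts_iff_coeff_lifts]
      exact fun n => ⟨⟨_, h n⟩, rfl⟩
    obtain ⟨q, hq, -, hm⟩ := lifts_and_natDegree_eq_and_monic hl (minpoly.monic hx)
    refine ⟨q, hm, ?_⟩
    rw [IsScalarTower.algebraMap_eq ℤ_[p] ℚ_[p] L, ← eval₂_map, hq]
    exact minpoly.aeval _ _

theorem exists_isNormalizedValuation (p : ℕ) [Fact p.Prime] (L : Type*) [Field L]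
    [Algebra ℚ_[p] L] [FiniteDimensional ℚ_[p] L] :
    ∃ v : Valuation L ℤᵐ⁰, IsNormalizedValuation p L v := by
  let _ := padicIntAlgebra p L
  have : IsScalarTower ℤ_[p] ℚ_[p] L := IsScalarTower.of_algebraMap_eq fun _ => rfl
  have : CharZero L := charZero_of_injective_algebraMap (algebraMap ℚ_[p] L).injective
  have : IsFractionRing (integralClosure ℤ_[p] L) L :=
    integralClosure.isFractionRing_of_finite_extension ℚ_[p] L
  have : IsDedekindDomain (integralClosure ℤ_[p] L) :=
    integralClosure.isDedekindDomain ℤ_[p] ℚ_[p] L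
  have : ValuationRing (integralClosure ℤ_[p] L) := by
    rw [ValuationRing.iff_isInteger_or_isInteger (integralClosure ℤ_[p] L) L]
    intro x
    have key : ∀ y : L, spectralNorm ℚ_[p] L y ≤ 1 →
        IsLocalization.IsInteger (integralClosure ℤ_[p] L) y := fun y hy =>
      ⟨⟨y, (isIntegral_padicInt_iff_spectralNorm_le_one y).2 hy⟩, rfl⟩
    by_cases hx : x = 0
    · left; subst hx; exact ⟨0, map_zero _⟩
    have hmul : spectralNorm ℚ_[p] L x * spectralNorm ℚ_[p] L x⁻¹ = 1 := by
      simp only [← spectralMulAlgNorm_def, ← map_mul, mul_inv_cancel₀ hx, map_one]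
    rcases le_total (spectralNorm ℚ_[p] L x) 1 with h | h
    · exact Or.inl (key _ h)
    · refine Or.inr (key _ ?_)
      have h0 : 0 ≤ spectralNorm ℚ_[p] L x⁻¹ := spectralNorm_nonneg _
      nlinarith
  have hpu : ¬ IsUnit ((p : ℕ) : integralClosure ℤ_[p] L) := by
    rintro h
    obtain ⟨y, hy⟩ := h.exists_right_inv
    have hp0 : (p : ℚ_[p]) ≠ 0 := by
      exact_mod_cast (Fact.out : p.Prime).ne_zero
    have hyL : (y : L) = algebraMap ℚ_[p] L (p : ℚ_[p])⁻¹ := by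
      have h1 : (p : L) * (y : L) = 1 := by exact_mod_cast congrArg Subtype.val hy
      rw [map_inv₀, map_natCast]
      exact eq_inv_of_mul_eq_one_right h1
    have hint : IsIntegral ℤ_[p] (algebraMap ℚ_[p] L (p : ℚ_[p])⁻¹) := hyL ▸ y.2
    rw [isIntegral_algebraMap_iff (algebraMap ℚ_[p] L).injective] at hint
    obtain ⟨z, hz⟩ := IsIntegrallyClosed.isIntegral_iff.1 hint
    have h2 : ‖(p : ℚ_[p])⁻¹‖ ≤ 1 := hz ▸ z.2
    rw [norm_inv, Padic.norm_p, inv_inv] at h2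
    have := (Fact.out : p.Prime).one_lt
    have h3 : (1 : ℝ) < p := by exact_mod_cast this
    linarith
  have hp0 : ((p : ℕ) : integralClosure ℤ_[p] L) ≠ 0 := by
    intro h
    have : (p : L) = 0 := by exact_mod_cast congrArg Subtype.val h
    exact (Fact.out : p.Prime).ne_zero (by exact_mod_cast this)
  have hmax : (IsLocalRing.maximalIdeal (integralClosure ℤ_[p] L)) ≠ ⊥ := by
    intro h
    have : ((p : ℕ) : integralClosure ℤ_[p] L) ∈ IsLocalRing.maximalIdeal _ := hpu
    rw [h] at this
    exact hp0 this
  let P : IsDedekindDomain.HeightOneSpectrum (integralClosure ℤ_[p] L) :=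
    ⟨IsLocalRing.maximalIdeal _, inferInstance, hmax⟩
  have hP : maxIdeal p L = P.asIdeal :=
    IsLocalRing.jacobson_eq_maximalIdeal (⊥ : Ideal (integralClosure ℤ_[p] L)) bot_ne_top
  refine ⟨P.valuation L, fun x => ⟨fun hx => P.valuation_le_one ⟨x, hx⟩, fun hx => ?_⟩,
    fun n y => ?_, P.valuation_exists_uniformizer L, ?_⟩
  · have hall : ∀ Q : IsDedekindDomain.HeightOneSpectrum (integralClosure ℤ_[p] L),
        Q.valuation L x ≤ 1 := by
      intro Q
      have : Q = P := by
        ext1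
        exact IsLocalRing.eq_maximalIdeal (Q.isPrime.isMaximal Q.ne_bot)
      rwa [this]
    obtain ⟨y, rfl⟩ :=
      IsDedekindDomain.HeightOneSpectrum.mem_integers_of_valuation_le_one L x hall
    exact y.2
  · rw [hP]
    exact (P.intValuation_le_pow_iff_mem y n).symm.trans
      (Iff.of_eq (congrArg (· ≤ _) (P.valuation_of_algebraMap (K := L) y).symm))
  · have : ((p : ℕ) : integralClosure ℤ_[p] L) ∈ P.asIdeal := hpu
    rw [← P.valuation_lt_one_iff_mem (K := L)] at this
    simpa using this

theorem map_mem_ringOfInt {p : ℕ} [Fact p.Prime] {L L' : Type*} [Field L] [Field L']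
    [Algebra ℚ_[p] L] [Algebra ℚ_[p] L'] (f : L →ₐ[ℚ_[p]] L') {x : L} (hx : x ∈ ringOfInt p L) :
    f x ∈ ringOfInt p L' := by
  obtain ⟨q, hq, hx⟩ := hx
  refine ⟨q, hq, ?_⟩
  have h := congrArg f.toRingHom hx
  rw [hom_eval₂, map_zero] at h
  convert! h using 2
  exact RingHom.ext fun z => (f.commutes z).symm

namespace IsNormalizedValuation

variable {p : ℕ} [Fact p.Prime] {L L' : Type*} [Field L] [Field L']
  [Algebra ℚ_[p] L] [Algebra ℚ_[p] L'] {v : Valuation L ℤᵐ⁰} {v' : Valuation L' ℤᵐ⁰}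

theorem map_natCast_ne_zero (v : Valuation L ℤᵐ⁰) : v (p : L) ≠ 0 := by
  have : CharZero L := charZero_of_injective_algebraMap (algebraMap ℚ_[p] L).injective
  rw [v.ne_zero_iff]
  exact_mod_cast (Fact.out : p.Prime).ne_zero

theorem map_natCast_eq (hv : IsNormalizedValuation p L v) :
    v (p : L) = exp (-(eAbs p L : ℤ)) := by
  obtain ⟨k, hk⟩ : ∃ k : ℤ, v (p : L) = exp k := ⟨_, (exp_log (map_natCast_ne_zero v)).symm⟩
  have hk0 : k < 0 := by
    have := hv.map_p_lt_one
    rwa [hk, ← exp_zero, exp_lt_exp] at this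
  obtain ⟨n, rfl⟩ : ∃ n : ℕ, k = -n := ⟨k.natAbs, by omega⟩
  have : {m : ℕ | Ideal.span {(p : ringOfInt p L)} ≤ maxIdeal p L ^ m} = Set.Iic n := by
    ext m
    rw [Set.mem_ofPred_eq, Ideal.span_singleton_le_iff_mem, hv.mem_maxIdeal_pow_iff]
    push_cast
    rw [hk, exp_le_exp, Set.mem_Iic]
    omega
  rw [hk, eAbs, this, csSup_Iic]

theorem eAbs_pos (hv : IsNormalizedValuation p L v) : 0 < eAbs p L := by
  have := hv.map_p_lt_one
  rw [hv.map_natCast_eq, ← exp_zero, exp_lt_exp] at this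
  omega

/-- Along an embedding of `p`-adic fields, normalized valuations differ by an exponent, the
ramification index. -/
theorem exists_map_eq_pow (hv : IsNormalizedValuation p L v) (hv' : IsNormalizedValuation p L' v')
    (f : L →ₐ[ℚ_[p]] L') : ∃ e : ℕ, e ≠ 0 ∧ ∀ x, v' (f x) = v x ^ e := by
  have hle : ∀ x, v x ≤ 1 → v' (f x) ≤ 1 := fun x hx =>
    (hv'.mem_ringOfInt_iff _).1 (map_mem_ringOfInt f ((hv.mem_ringOfInt_iff x).2 hx))
  have hunit : ∀ x, v x = 1 → v' (f x) = 1 := by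
    intro x hx
    refine le_antisymm (hle x hx.le) ?_
    have := hle x⁻¹ (by rw [map_inv₀, hx, inv_one])
    have h0 : v' (f x) ≠ 0 := by
      rw [v'.ne_zero_iff, _root_.map_ne_zero]
      rintro rfl
      simp at hx
    rwa [map_inv₀, map_inv₀, inv_le_one₀ (zero_lt_iff.2 h0)] at this
  obtain ⟨ϖ, hϖ⟩ := hv.exists_uniformizer
  have hϖ0 : ϖ ≠ 0 := v.ne_zero_iff.1 (hϖ ▸ exp_ne_zero)
  obtain ⟨k, hk⟩ : ∃ k : ℤ, v' (f ϖ) = exp k := ⟨_, (exp_log (by simpa using hϖ0)).symm⟩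
  have hk0 : k ≤ 0 := by
    have := hle ϖ (by rw [hϖ, ← exp_zero, exp_le_exp]; omega)
    rwa [hk, ← exp_zero, exp_le_exp] at this
  obtain ⟨e, rfl⟩ : ∃ n : ℕ, k = -n := ⟨k.natAbs, by omega⟩
  have hmain : ∀ x, x ≠ 0 → v' (f x) = v x ^ e := by
    intro x hx
    obtain ⟨m, hm⟩ : ∃ m : ℤ, v x = exp m := ⟨_, (exp_log (by simpa using hx)).symm⟩
    have h1 := hunit (x * ϖ ^ m) (by
      rw [map_mul, map_zpow₀, hm, hϖ, ← exp_zsmul, ← exp_add, ← exp_zero]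
      congr 1
      simp)
    rw [map_mul, map_zpow₀, map_mul, map_zpow₀, hk] at h1
    rw [eq_inv_of_mul_eq_one_left h1, hm, ← exp_zsmul, ← exp_nsmul, ← exp_neg]
    congr 1
    simp [mul_comm]
  have he : e ≠ 0 := by
    rintro rfl
    have hp := hmain (p : L) ((v.ne_zero_iff).1 (map_natCast_ne_zero v))
    rw [map_natCast, pow_zero] at hp
    exact hv'.map_p_lt_one.ne hp
  refine ⟨e, he, fun x => ?_⟩
  by_cases hx : x = 0
  · simp [hx, he]
  · exact hmain x hx

theorem map_algEquiv (hv : IsNormalizedValuation p L v) (σ : L ≃ₐ[ℚ_[p]] L) (x : L) :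
    v (σ x) = v x := by
  obtain ⟨e, he, h⟩ := hv.exists_map_eq_pow hv (σ : L →ₐ[ℚ_[p]] L)
  obtain ⟨e', he', h'⟩ := hv.exists_map_eq_pow hv (σ.symm : L →ₐ[ℚ_[p]] L)
  obtain ⟨ϖ, hϖ⟩ := hv.exists_uniformizer
  have h1 := h' (σ ϖ)
  have h2 := h ϖ
  simp only [AlgEquiv.coe_toAlgHom, AlgEquiv.symm_apply_apply] at h1 h2
  rw [h2, hϖ, ← pow_mul, ← exp_nsmul, exp_inj, nsmul_eq_mul] at h1
  have h3 : e * e' = 1 := by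
    zify
    push_cast at h1
    linarith
  have h4 := h x
  rw [Nat.eq_one_of_mul_eq_one_right h3, pow_one] at h4
  exact h4

end IsNormalizedValuation

section Ramified

variable {L L' : Type*} [Field L] [Field L'] [Algebra L L'] {v : Valuation L ℤᵐ⁰}
  {v' : Valuation L' ℤᵐ⁰} {e : ℕ} {ϖ : L'}

theorem valuation_term_le_sum (h : ∀ x, v' (algebraMap L L' x) = v x ^ e)
    (hϖ : v' ϖ = exp (-1 : ℤ)) (a : Fin e → L) (j : Fin e) :
    v' (a j • ϖ ^ (j : ℕ)) ≤ v' (∑ i, a i • ϖ ^ (i : ℕ)) := by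
  classical
  have hval : ∀ i : Fin e, a i ≠ 0 →
      ∃ m : ℤ, v' (a i • ϖ ^ (i : ℕ)) = exp (m * e - (i : ℕ)) := by
    intro i hi
    obtain ⟨m, hm⟩ : ∃ m : ℤ, v (a i) = exp m := ⟨_, (exp_log (by simpa using hi)).symm⟩
    refine ⟨m, ?_⟩
    rw [Algebra.smul_def, map_mul, h, hm, map_pow, hϖ, ← exp_nsmul, ← exp_nsmul, ← exp_add]
    congr 1
    simp only [nsmul_eq_mul]
    ring
  by_cases haj : v' (a j • ϖ ^ (j : ℕ)) = 0
  · rw [haj]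
    exact zero_le
  obtain ⟨k, -, hk⟩ := Finset.exists_max_image Finset.univ (fun i => v' (a i • ϖ ^ (i : ℕ)))
    ⟨j, Finset.mem_univ j⟩
  have hak : a k ≠ 0 := by
    intro h0
    have := hk j (Finset.mem_univ j)
    rw [h0, zero_smul, map_zero] at this
    exact haj (le_zero_iff.1 this)
  refine (hk j (Finset.mem_univ j)).trans (le_of_eq ?_)
  symm
  refine v'.map_sum_eq_of_lt (j := k) (Finset.mem_univ k) fun i hi => ?_
  have hik : i ≠ k := by simpa using hi
  refine lt_of_le_of_ne (hk i (Finset.mem_univ i)) fun heq => hik ?_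
  have hai : a i ≠ 0 := by
    intro h0
    obtain ⟨m, hm⟩ := hval k hak
    rw [h0, zero_smul, map_zero, hm] at heq
    exact exp_ne_zero heq.symm
  obtain ⟨m, hm⟩ := hval k hak
  obtain ⟨m', hm'⟩ := hval i hai
  rw [hm, hm', exp_inj] at heq
  have hmod : ((i : ℕ) : ℤ) ≡ (k : ℕ) [ZMOD e] := by
    rw [Int.modEq_iff_dvd]
    exact ⟨m - m', by linear_combination heq⟩
  rw [Int.natCast_modEq_iff] at hmod
  exact Fin.ext (hmod.eq_of_lt_of_lt i.2 k.2)

theorem linearIndependent_pow_of_valuation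
    (h : ∀ x, v' (algebraMap L L' x) = v x ^ e) (hϖ : v' ϖ = exp (-1 : ℤ)) :
    LinearIndependent L (fun i : Fin e => ϖ ^ (i : ℕ)) := by
  have hϖ0 : ϖ ≠ 0 := v'.ne_zero_iff.1 (hϖ ▸ exp_ne_zero)
  rw [Fintype.linearIndependent_iff]
  intro a ha j
  have := valuation_term_le_sum h hϖ a j
  rw [ha, map_zero, le_zero_iff, v'.zero_iff, smul_eq_zero] at this
  exact this.resolve_right (pow_ne_zero _ hϖ0)

theorem le_finrank_of_valuation [FiniteDimensional L L']
    (h : ∀ x, v' (algebraMap L L' x) = v x ^ e) (hϖ : v' ϖ = exp (-1 : ℤ)) :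
    e ≤ Module.finrank L L' := by
  simpa using (linearIndependent_pow_of_valuation h hϖ).fintype_card_le_finrank

/-- In a totally ramified extension, a uniformizer generates the valuation ring. -/
theorem exists_aeval_eq_of_valuation_le_one [FiniteDimensional L L']
    (he : e = Module.finrank L L') (h : ∀ x, v' (algebraMap L L' x) = v x ^ e)
    (hϖ : v' ϖ = exp (-1 : ℤ)) {x : L'} (hx : v' x ≤ 1) :
    ∃ g : L[X], (∀ i, v' (algebraMap L L' (g.coeff i)) ≤ 1) ∧ aeval ϖ g = x := by
  classical
  have he0 : e ≠ 0 := he ▸ Module.finrank_pos.ne'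
  have : Nonempty (Fin e) := ⟨⟨0, Nat.pos_of_ne_zero he0⟩⟩
  have hspan := (linearIndependent_pow_of_valuation h hϖ).span_eq_top_of_card_eq_finrank
    (by simpa using he)
  obtain ⟨a, ha⟩ := (Submodule.mem_span_range_iff_exists_fun L).1
    (hspan.symm ▸ Submodule.mem_top : x ∈ _)
  have hcoeff : ∀ j, v' (algebraMap L L' (a j)) ≤ 1 := by
    intro j
    by_cases haj : a j = 0
    · simp [haj]
    obtain ⟨m, hm⟩ : ∃ m : ℤ, v (a j) = exp m := ⟨_, (exp_log (by simpa using haj)).symm⟩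
    have hle := (valuation_term_le_sum h hϖ a j).trans ((congrArg v' ha).le.trans hx)
    rw [Algebra.smul_def, map_mul, h, hm, map_pow, hϖ, ← exp_nsmul, ← exp_nsmul, ← exp_add,
      ← exp_zero, exp_le_exp] at hle
    simp only [nsmul_eq_mul] at hle
    rw [h, hm, ← exp_nsmul, ← exp_zero, exp_le_exp, nsmul_eq_mul]
    have hj : ((j : ℕ) : ℤ) < e := by exact_mod_cast j.2
    by_contra! hpos
    have hm1 : 0 < m := by
      by_contra! hm0
      nlinarith
    nlinarith
  refine ⟨∑ j : Fin e, Polynomial.monomial (j : ℕ) (a j), fun i => ?_, ?_⟩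
  · rw [finsetSum_coeff, map_sum]
    refine v'.map_sum_le fun j _ => ?_
    rw [coeff_monomial]
    split_ifs
    · exact hcoeff j
    · simp
  · rw [map_sum, ← ha]
    exact Finset.sum_congr rfl fun j _ => by rw [aeval_monomial, Algebra.smul_def]

end Ramified

section Generator

variable {M : Type*} [Field M] {v : Valuation M ℤᵐ⁰}

theorem valuation_eval_sub_eval_le {g : M[X]} (hg : ∀ i, v (g.coeff i) ≤ 1) {x y : M}
    (hx : v x ≤ 1) (hy : v y ≤ 1) : v (g.eval x - g.eval y) ≤ v (x - y) := by
  rw [eval_eq_sum_range, eval_eq_sum_range, ← Finset.sum_sub_distrib]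
  refine v.map_sum_le fun i _ => ?_
  rw [← mul_sub, ← (Commute.all x y).geom_sum₂_mul, map_mul, map_mul]
  refine (mul_le_of_le_one_left' (hg i)).trans
    (mul_le_of_le_one_left' (v.map_sum_le fun j _ => ?_))
  rw [map_mul, map_pow, map_pow]
  exact mul_le_one' (pow_le_one' hx _) (pow_le_one' hy _)

theorem mem_lifts_integer_iff {g : M[X]} :
    g ∈ lifts v.integer.subtype ↔ ∀ i, v (g.coeff i) ≤ 1 := by
  rw [lifts_iff_coeff_lifts]
  refine forall_congr' fun i => ?_
  rw [← RingHom.coe_range, Subring.range_subtype]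
  exact Iff.rfl

theorem valuation_coeff_prod_le_one {ι : Type*} (s : Finset ι) {r : ι → M}
    (hr : ∀ i, v (r i) ≤ 1) (n : ℕ) : v ((∏ i ∈ s, (X - C (r i))).coeff n) ≤ 1 := by
  refine mem_lifts_integer_iff.1 (prod_mem fun i _ => mem_lifts_integer_iff.2 fun n => ?_) n
  rw [coeff_sub, coeff_X, coeff_C]
  refine v.map_sub_le ?_ ?_ <;> split_ifs <;> simp [hr]

theorem valuation_eval_le_prod_of_roots {ι : Type*} [Fintype ι] {g : M[X]}
    (hg : ∀ i, v (g.coeff i) ≤ 1) {r : ι → M} (hinj : Function.Injective r)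
    (hr : ∀ i, v (r i) ≤ 1) (hroot : ∀ i, g.eval (r i) = 0) {x : M} (hx : v x ≤ 1) :
    v (g.eval x) ≤ ∏ i, v (x - r i) := by
  obtain ⟨q, rfl⟩ := mem_lifts_integer_iff.2 hg
  let r' : ι → v.integer := fun i => ⟨r i, hr i⟩
  have hdvd : ∏ i, (X - C (r' i)) ∣ q := by
    by_cases hq : q = 0
    · simp [hq]
    have h := (Multiset.prod_X_sub_C_dvd_iff_le_roots hq (Finset.univ.val.map r')).2 <| by
      rw [Multiset.le_iff_subset (Finset.univ.nodup.map fun i j h => hinj (congrArg Subtype.val h))]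
      intro a ha
      obtain ⟨i, -, rfl⟩ := Multiset.mem_map.1 ha
      rw [mem_roots hq, IsRoot.def]
      apply v.integer.subtype_injective
      rw [map_zero, ← hroot i]
      exact hom_eval₂ q (RingHom.id _) v.integer.subtype (r' i) |>.trans (eval_map _ _).symm
    rwa [Multiset.map_map] at h
  obtain ⟨h, rfl⟩ := hdvd
  have hev : ∀ w : (v.integer)[X], v ((w.map v.integer.subtype).eval x) ≤ 1 := by
    intro w
    have : (w.map v.integer.subtype).eval x = v.integer.subtype (w.eval ⟨x, hx⟩) :=
      (eval_map _ _).trans (hom_eval₂ w (RingHom.id _) v.integer.subtype ⟨x, hx⟩).symm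
    rw [this]
    exact (w.eval ⟨x, hx⟩).2
  rw [coe_mapRingHom, Polynomial.map_mul, eval_mul, map_mul, Polynomial.map_prod, eval_prod,
    map_prod]
  refine (mul_le_of_le_one_right' (hev h)).trans (Finset.prod_le_prod' fun i _ => ?_)
  simp [r']

variable {K E : Type*} [Field K] [Field E] [Algebra K M]

/-- `x` is an integral element generating the ring of `v`-integers of `E` over that of `K`. -/
def IsIntegralGenerator (K : Type*) {E M : Type*} [Field K] [Field E] [Field M] [Algebra K E]
    [Algebra K M] [Algebra E M] (v : Valuation M ℤᵐ⁰) (x : E) : Prop :=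
  v (algebraMap E M x) ≤ 1 ∧ ∀ z : E, v (algebraMap E M z) ≤ 1 →
    ∃ g : K[X], (∀ i, v (algebraMap K M (g.coeff i)) ≤ 1) ∧ aeval x g = z

variable [Algebra K E] [Algebra E M] [IsScalarTower K E M]

theorem IsIntegralGenerator.valuation_map_sub_le {y : E} (hy : IsIntegralGenerator K v y)
    (σ : E ≃ₐ[K] E) (hσ : ∀ z, v (algebraMap E M (σ z)) = v (algebraMap E M z))
    {z : E} (hz : v (algebraMap E M z) ≤ 1) :
    v (algebraMap E M (σ z) - algebraMap E M z) ≤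
      v (algebraMap E M (σ y) - algebraMap E M y) := by
  obtain ⟨g, hg, rfl⟩ := hy.2 z hz
  have key : ∀ w : E, algebraMap E M (aeval w g) =
      (g.map (algebraMap K M)).eval (algebraMap E M w) := by
    intro w
    rw [eval_map_algebraMap, aeval_algebraMap_apply]
  rw [← aeval_algHom_apply, key, key]
  exact valuation_eval_sub_eval_le (by simpa using hg) ((hσ y).trans_le hy.1) hy.1

theorem IsIntegralGenerator.injective_apply {x : M} (hx : IsIntegralGenerator K v x) :
    Function.Injective fun t : M ≃ₐ[K] M => t x := by
  intro t t' (h : t x = t' x)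
  have hint : ∀ z, v z ≤ 1 → t z = t' z := by
    intro z hz
    obtain ⟨g, -, rfl⟩ := hx.2 z hz
    rw [← aeval_algHom_apply, ← aeval_algHom_apply, h]
  ext z
  rcases le_total (v z) 1 with h1 | h1
  · exact hint z h1
  · have := hint z⁻¹ (by rw [map_inv₀]; exact inv_le_one_of_one_le₀ h1)
    rw [map_inv₀, map_inv₀] at this
    exact inv_injective this

variable [FiniteDimensional E M]

open scoped Classical in
/-- The product formula for ramification numbers in the quotient of a Galois group. -/
theorem prod_valuation_map_sub [IsGalois E M] {x : M} {y : E}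
    (hx : IsIntegralGenerator K v x) (hy : IsIntegralGenerator K v y)
    (hv : ∀ (σ : M ≃ₐ[K] M) z, v (σ z) = v z) (s : M ≃ₐ[K] M) (s' : E ≃ₐ[K] E)
    (hs : ∀ z, s (algebraMap E M z) = algebraMap E M (s' z)) :
    ∏ t : M ≃ₐ[E] M, v (s (t x) - x) = v (algebraMap E M (s' y) - algebraMap E M y) := by
  have hvE : ∀ (t : M ≃ₐ[E] M) z, v (t z) = v z := fun t z => hv (t.restrictScalars K) z
  have hxO : v x ≤ 1 := hx.1
  have hs' : ∀ z, v (algebraMap E M (s' z)) = v (algebraMap E M z) := fun z => by rw [← hs, hv]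
  have hprod : ∏ t : M ≃ₐ[E] M, v (s (t x) - x) = v (∏ t : M ≃ₐ[E] M, (x - s (t x))) := by
    rw [map_prod]
    exact Finset.prod_congr rfl fun t _ => v.map_sub_swap _ _
  rw [hprod]
  have hcast : ∀ t : M ≃ₐ[E] M, v (s (t x)) ≤ 1 := fun t => by rwa [hv, hvE]
  apply le_antisymm
  · set F : M[X] := ∏ t : M ≃ₐ[E] M, (X - C (t x)) with hF
    have hF1 : ∀ i, v (F.coeff i) ≤ 1 :=
      valuation_coeff_prod_le_one _ fun t => by rwa [hvE]
    have hFx : F.eval x = 0 := by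
      rw [hF, eval_prod]
      exact Finset.prod_eq_zero (Finset.mem_univ 1) (by simp)
    have hFs : (F.map (s : M →+* M)).eval x = ∏ t : M ≃ₐ[E] M, (x - s (t x)) := by
      rw [hF, Polynomial.map_prod, eval_prod]
      simp
    have hFE : ∀ i, F.coeff i ∈ Set.range (algebraMap E M) := by
      intro i
      rw [IsGalois.mem_range_algebraMap_iff_fixed]
      intro u
      have : F.map (u : M →+* M) = F := by
        rw [hF, Polynomial.map_prod]
        exact Fintype.prod_equiv (Equiv.mulLeft u) _ _ fun t => by simp
      conv_rhs => rw [← this, coeff_map]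
      rfl
    have hdiff : ∏ t : M ≃ₐ[E] M, (x - s (t x)) =
        ∑ i ∈ Finset.range (F.natDegree + 1), (s (F.coeff i) - F.coeff i) * x ^ i := by
      rw [← hFs, ← sub_zero (eval x _), ← hFx, eval_eq_sum_range,
        natDegree_map, eval_eq_sum_range, ← Finset.sum_sub_distrib]
      refine Finset.sum_congr rfl fun i _ => ?_
      rw [coeff_map, sub_mul]
      rfl
    rw [hdiff]
    refine v.map_sum_le fun i _ => ?_
    obtain ⟨z, hz⟩ := hFE i
    have hFi := hF1 i
    rw [← hz] at hFi ⊢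
    rw [map_mul, map_pow, hs]
    exact (mul_le_of_le_one_right' (pow_le_one' hxO _)).trans
      (hy.valuation_map_sub_le s' hs' hFi)
  · obtain ⟨g, hg, hgy⟩ := hx.2 (algebraMap E M y) hy.1
    set G : M[X] := g.map (algebraMap K M) - C (algebraMap E M (s' y)) with hG
    have hG1 : ∀ i, v (G.coeff i) ≤ 1 := by
      intro i
      rw [hG, coeff_sub, coeff_map, coeff_C]
      refine v.map_sub_le (hg i) ?_
      split_ifs
      · exact (hs' y).trans_le hy.1
      · simp
    have hroot : ∀ t : M ≃ₐ[E] M, G.eval (s (t x)) = 0 := by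
      intro t
      have h1 : aeval (t x) g = algebraMap E M y := by
        rw [← t.commutes y, ← AlgEquiv.restrictScalars_apply K t,
          ← AlgEquiv.restrictScalars_apply K t, aeval_algHom_apply, hgy]
      rw [hG, eval_sub, eval_C, eval_map_algebraMap, aeval_algHom_apply, h1, hs, sub_self]
    have hGx : G.eval x = algebraMap E M y - algebraMap E M (s' y) := by
      rw [hG, eval_sub, eval_C, eval_map_algebraMap, hgy]
    have hinj : Function.Injective fun t : M ≃ₐ[E] M => s (t x) := by
      intro t t' h
      have h2 := hx.injective_apply (a₁ := t.restrictScalars K) (a₂ := t'.restrictScalars K)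
        (s.injective h)
      exact AlgEquiv.ext fun z => DFunLike.congr_fun h2 z
    rw [v.map_sub_swap, ← hGx, map_prod]
    exact valuation_eval_le_prod_of_roots hG1 hinj hcast hroot hxO

end Generator

section TotallyRamified

variable {p : ℕ} [Fact p.Prime] {K E M : Type*} [Field K] [Field E] [Field M] [Algebra ℚ_[p] M]
  [Algebra K E] [Algebra K M] [Algebra E M] {v : Valuation M ℤᵐ⁰}

section Base

variable [Algebra ℚ_[p] K] [IsScalarTower ℚ_[p] K M] {vK : Valuation K ℤᵐ⁰}

theorem exists_ramificationIndex [FiniteDimensional K M] (hK : IsNormalizedValuation p K vK)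
    (hM : IsNormalizedValuation p M v) :
    ∃ e : ℕ, e ≤ Module.finrank K M ∧ eAbs p M = e * eAbs p K ∧
      ∀ x, v (algebraMap K M x) = vK x ^ e := by
  obtain ⟨e, -, he⟩ := hK.exists_map_eq_pow hM (IsScalarTower.toAlgHom ℚ_[p] K M)
  obtain ⟨ϖ, hϖ⟩ := hM.exists_uniformizer
  refine ⟨e, le_finrank_of_valuation he hϖ, ?_, he⟩
  have h := he (p : K)
  rw [map_natCast, hM.map_natCast_eq, hK.map_natCast_eq, ← exp_nsmul, exp_inj,
    nsmul_eq_mul] at h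
  zify
  linarith

theorem valuation_algebraMap_eq_pow_finrank [FiniteDimensional K M]
    (hK : IsNormalizedValuation p K vK) (hM : IsNormalizedValuation p M v)
    (htot : eAbs p M = Module.finrank K M * eAbs p K) (x : K) :
    v (algebraMap K M x) = vK x ^ Module.finrank K M := by
  obtain ⟨e, -, he, h⟩ := exists_ramificationIndex hK hM
  rw [htot] at he
  rw [h, Nat.eq_of_mul_eq_mul_right hK.eAbs_pos he]

theorem isIntegralGenerator_of_uniformizer [FiniteDimensional K M]
    (hK : IsNormalizedValuation p K vK) (hM : IsNormalizedValuation p M v)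
    (htot : eAbs p M = Module.finrank K M * eAbs p K) {ϖ : M} (hϖ : v ϖ = exp (-1 : ℤ)) :
    IsIntegralGenerator K v ϖ :=
  ⟨by rw [Algebra.algebraMap_self_apply, hϖ, ← exp_zero, exp_le_exp]; omega,
    fun _ hz => exists_aeval_eq_of_valuation_le_one rfl
      (valuation_algebraMap_eq_pow_finrank hK hM htot) hϖ hz⟩

end Base

theorem eAbs_eq_of_tower [Algebra ℚ_[p] K] [Algebra ℚ_[p] E] [IsScalarTower ℚ_[p] K E]
    [IsScalarTower ℚ_[p] E M] [IsScalarTower K E M] [FiniteDimensional K E]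
    [FiniteDimensional E M] {vK : Valuation K ℤᵐ⁰} {vE : Valuation E ℤᵐ⁰}
    (hK : IsNormalizedValuation p K vK)
    (hE : IsNormalizedValuation p E vE) (hM : IsNormalizedValuation p M v)
    (htot : eAbs p M = Module.finrank K M * eAbs p K) :
    eAbs p E = Module.finrank K E * eAbs p K ∧ eAbs p M = Module.finrank E M * eAbs p E := by
  obtain ⟨e, he, h, -⟩ := exists_ramificationIndex hK hE
  obtain ⟨f, hf, h', -⟩ := exists_ramificationIndex hE hM
  have hpos := hK.eAbs_pos
  rw [← Module.finrank_mul_finrank K E M] at htot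
  have h1 : e * f = Module.finrank K E * Module.finrank E M := by
    refine Nat.eq_of_mul_eq_mul_right hpos ?_
    rw [← htot, h', h]
    ring
  have hn : 0 < Module.finrank K E := Module.finrank_pos
  have hm : 0 < Module.finrank E M := Module.finrank_pos
  have he' : e = Module.finrank K E := by
    refine le_antisymm he (Nat.le_of_mul_le_mul_right (h1.symm.le.trans ?_) hm)
    gcongr
  have hf' : f = Module.finrank E M := by
    subst he'
    exact Nat.eq_of_mul_eq_mul_left hn h1
  rw [← he', ← hf']
  exact ⟨h, h'⟩

/-- A nontrivial automorphism realizes the unique ramification jump on a uniformizer. -/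
theorem HasUniqueRamJump.valuation_map_sub_eq [Algebra ℚ_[p] K] [Algebra ℚ_[p] E]
    [IsScalarTower ℚ_[p] K M] [IsScalarTower ℚ_[p] E M] [IsScalarTower K E M] (hM : IsNormalizedValuation p M v) {ϖ : M}
    (hϖ : v ϖ = exp (-1 : ℤ)) (hgen : IsIntegralGenerator K v ϖ) {t : ℕ}
    (ht : HasUniqueRamJump p E M t) {σ : M ≃ₐ[E] M} (hσ : σ ≠ 1) :
    v (σ ϖ - ϖ) = exp (-(t + 1 : ℤ)) := by
  have hinv : ∀ (τ : M ≃ₐ[E] M) z, v (τ z) = v z :=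
    fun τ z => hM.map_algEquiv (τ.restrictScalars ℚ_[p]) z
  have hmem : ∀ (τ : M ≃ₐ[E] M) (i : ℕ),
      τ ∈ ramSet p E M i ↔ v (τ ϖ - ϖ) ≤ exp (-((i : ℤ) + 1)) := by
    intro τ i
    constructor
    · intro h
      obtain ⟨y, hy, hy'⟩ := h ⟨ϖ, (hM.mem_ringOfInt_iff ϖ).2 hgen.1⟩
      rw [hM.mem_maxIdeal_pow_iff, hy'] at hy
      simpa using hy
    · intro h x
      have hx := (hM.mem_ringOfInt_iff x).1 x.2
      have h1 : v (τ x - x) ≤ exp (-((i : ℤ) + 1)) :=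
        (hgen.valuation_map_sub_le (τ.restrictScalars K) (hinv τ) hx).trans h
      have h2 : v (τ x - x) ≤ 1 :=
        h1.trans (by rw [← exp_zero, exp_le_exp]; omega)
      refine ⟨⟨τ x - x, (hM.mem_ringOfInt_iff _).2 h2⟩, ?_, rfl⟩
      rw [hM.mem_maxIdeal_pow_iff]
      simpa using h1
  have hne : v (σ ϖ - ϖ) ≠ 0 := by
    rw [v.ne_zero_iff, sub_ne_zero]
    intro h
    have := hgen.injective_apply (a₁ := σ.restrictScalars K) (a₂ := 1) h
    exact hσ (AlgEquiv.ext fun z => DFunLike.congr_fun this z)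
  obtain ⟨k, hk⟩ : ∃ k : ℤ, v (σ ϖ - ϖ) = exp k := ⟨_, (exp_log hne).symm⟩
  have hk1 : k ≤ -1 := by
    rw [← exp_le_exp, ← hk]
    exact v.map_sub_le ((hinv σ ϖ).trans hϖ).le hϖ.le
  obtain ⟨n, rfl⟩ : ∃ n : ℕ, k = -((n : ℤ) + 1) := ⟨(-k - 1).toNat, by omega⟩
  have hjump : IsRamJump p E M n := by
    intro h
    have h1 : σ ∈ ramSet p E M n := (hmem σ n).2 hk.le
    rw [h, hmem, hk, exp_le_exp] at h1
    push_cast at h1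
    omega
  rw [hk, ht.2 n hjump]

end TotallyRamified

section Compositum

variable {p : ℕ} [Fact p.Prime] {K M : Type*} [Field K] [Field M] [Algebra ℚ_[p] K]
  [Algebra ℚ_[p] M] [Algebra K M] [IsScalarTower ℚ_[p] K M] [FiniteDimensional ℚ_[p] M]

theorem ramJump_relation {E E' : IntermediateField K M} (hsup : E ⊔ E' = ⊤) [IsGalois K E]
    [IsGalois K M] (htot : eAbs p M = Module.finrank K M * eAbs p K) {a b c : ℕ}
    (ha : HasUniqueRamJump p E' M a) (hb : HasUniqueRamJump p E M b)
    (hc : HasUniqueRamJump p K E c) (hab : a ≠ b) (hE' : 1 < Module.finrank E' M) :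
    (a + 1 : ℤ) + (Module.finrank E M - 1) * (min a b + 1) = Module.finrank E M * (c + 1) := by
  classical
  have : FiniteDimensional K M := FiniteDimensional.right ℚ_[p] K M
  have : FiniteDimensional ℚ_[p] K := FiniteDimensional.left ℚ_[p] K M
  have htower (F : IntermediateField K M) : IsScalarTower ℚ_[p] F M :=
    .of_algebraMap_eq fun _ => rfl
  have := htower E
  have := htower E'
  have : FiniteDimensional ℚ_[p] E := FiniteDimensional.left ℚ_[p] E M
  obtain ⟨vK, hK⟩ := exists_isNormalizedValuation p K
  obtain ⟨vE, hE⟩ := exists_isNormalizedValuation p E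
  obtain ⟨v, hM⟩ := exists_isNormalizedValuation p M
  obtain ⟨htotE, htotM⟩ := eAbs_eq_of_tower hK hE hM htot
  obtain ⟨ϖ, hϖ⟩ := hM.exists_uniformizer
  obtain ⟨y, hy⟩ := hE.exists_uniformizer
  have hgenM := isIntegralGenerator_of_uniformizer hK hM htot hϖ
  have hgenE := isIntegralGenerator_of_uniformizer hK hE htotE hy
  have hpow := valuation_algebraMap_eq_pow_finrank hE hM htotM
  set d := Module.finrank E M with hd
  have hd0 : d ≠ 0 := Module.finrank_pos.ne'
  have hone : ∀ z : E, v (algebraMap E M z) ≤ 1 ↔ vE z ≤ 1 := fun z => by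
    rw [hpow, pow_le_one_iff hd0]
  have hgenE' : IsIntegralGenerator K v y := by
    refine ⟨(hone y).2 hgenE.1, fun z hz => ?_⟩
    obtain ⟨g, hg, h⟩ := hgenE.2 z ((hone z).1 hz)
    exact ⟨g, fun i => (hone (algebraMap K E (g.coeff i))).2 (hg i), h⟩
  have hinv : ∀ (σ : M ≃ₐ[K] M) z, v (σ z) = v z :=
    fun σ z => hM.map_algEquiv (σ.restrictScalars ℚ_[p]) z
  obtain ⟨s, hs⟩ : ∃ s : M ≃ₐ[E'] M, s ≠ 1 := by
    have : Nontrivial (M ≃ₐ[E'] M) := by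
      rw [← Finite.one_lt_card_iff_nontrivial, IsGalois.card_aut_eq_finrank]
      exact hE'
    exact exists_ne 1
  set s₀ := s.restrictScalars K with hs₀
  set s' : E ≃ₐ[K] E := s₀.restrictNormal E with hs'
  have hcomm : ∀ z, s₀ (algebraMap E M z) = algebraMap E M (s' z) :=
    fun z => (AlgEquiv.restrictNormal_commutes s₀ E z).symm
  have hs'1 : s' ≠ 1 := by
    intro h
    have h1 : s₀ ∈ E.fixingSubgroup := by
      rw [IntermediateField.mem_fixingSubgroup_iff]
      intro z hz
      have := hcomm ⟨z, hz⟩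
      rwa [h] at this
    have h2 : s₀ ∈ E'.fixingSubgroup := by
      rw [IntermediateField.mem_fixingSubgroup_iff]
      exact fun z hz => s.commutes ⟨z, hz⟩
    have h3 : s₀ ∈ (E ⊔ E').fixingSubgroup := by
      rw [IntermediateField.fixingSubgroup_sup]
      exact ⟨h1, h2⟩
    rw [hsup, IntermediateField.fixingSubgroup_top, Subgroup.mem_bot] at h3
    exact hs (AlgEquiv.ext fun z => DFunLike.congr_fun h3 z)
  have hprod := prod_valuation_map_sub hgenM hgenE' hinv s₀ s' hcomm
  have hvs : v (s ϖ - ϖ) = exp (-(a + 1 : ℤ)) := ha.valuation_map_sub_eq hM hϖ hgenM hs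
  have hvt : ∀ t : M ≃ₐ[E] M, t ≠ 1 → v (s₀ (t ϖ) - ϖ) = exp (-((min a b : ℕ) + 1 : ℤ)) := by
    intro t ht
    have h1 : v (s₀ (t ϖ - ϖ)) = exp (-(b + 1 : ℤ)) := by
      rw [hinv, hb.valuation_map_sub_eq hM hϖ hgenM ht]
    have h2 : s₀ (t ϖ) - ϖ = s₀ (t ϖ - ϖ) + (s ϖ - ϖ) := by
      rw [map_sub]
      change _ = _ - s ϖ + _
      ring
    rw [h2]
    rcases hab.lt_or_gt with h | h
    · rw [min_eq_left h.le, ← hvs]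
      refine v.map_add_eq_of_lt_right ?_
      rw [h1, hvs, exp_lt_exp]
      omega
    · rw [min_eq_right h.le, ← h1]
      refine v.map_add_eq_of_lt_left ?_
      rw [h1, hvs, exp_lt_exp]
      omega
  have hvy : v (algebraMap E M (s' y) - algebraMap E M y) = exp (-(d * (c + 1) : ℤ)) := by
    rw [← map_sub, hpow, hc.valuation_map_sub_eq hE hy hgenE hs'1, ← exp_nsmul,
      nsmul_eq_mul, mul_neg]
  have hcard : Fintype.card (M ≃ₐ[E] M) = d := by
    rw [← Nat.card_eq_fintype_card, IsGalois.card_aut_eq_finrank]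
  rw [hvy, ← Finset.mul_prod_erase _ _ (Finset.mem_univ 1),
    Finset.prod_congr rfl fun t ht => hvt t (Finset.ne_of_mem_erase ht), Finset.prod_const,
    Finset.card_erase_of_mem (Finset.mem_univ _), Finset.card_univ, hcard] at hprod
  change v (s ϖ - ϖ) * _ = _ at hprod
  rw [hvs, ← exp_nsmul, ← exp_add, exp_inj, nsmul_eq_mul,
    Nat.cast_sub (Nat.one_le_iff_ne_zero.2 hd0)] at hprod
  push_cast at hprod ⊢
  linarith

end Compositum

end

/-- Let `K₁, K₂` be `p`-adic local fields with `K = K₁ ∩ K₂`, `[K₁:K] = [K₂:K] = p`,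
`K₁/K` and `K₂/K` Galois, `K₁K₂/K` totally ramified, and suppose `K₁/K`, `K₂/K`,
`K₁K₂/K₂`, `K₁K₂/K₁` have unique ramification jumps `t₁, t₂, t₁', t₂'` respectively,
with `t₁' < t₂'`.  Then `t₁' = t₁` and `t₂' = p·t₂ + (1-p)·t₁`. -/
theorem jumps_of_biquadratic (p : ℕ) [Fact p.Prime] (K M : Type*) [Field K] [Field M]
    [Algebra ℚ_[p] K] [Algebra ℚ_[p] M] [Algebra K M] [IsScalarTower ℚ_[p] K M]
    [FiniteDimensional ℚ_[p] M]
    (E₁ E₂ : IntermediateField K M)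
    (hinf : E₁ ⊓ E₂ = ⊥) (hsup : E₁ ⊔ E₂ = ⊤)
    [IsGalois K ↥E₁] [IsGalois K ↥E₂]
    (htotram : eAbs p M = Module.finrank K M * eAbs p K)
    (hd₁ : Module.finrank K ↥E₁ = p) (hd₂ : Module.finrank K ↥E₂ = p)
    (t₁ t₂ t₁' t₂' : ℕ)
    (ht₁ : HasUniqueRamJump p K ↥E₁ t₁) (ht₂ : HasUniqueRamJump p K ↥E₂ t₂)
    (ht₁' : HasUniqueRamJump p ↥E₂ M t₁') (ht₂' : HasUniqueRamJump p ↥E₁ M t₂')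
    (hlt : t₁' < t₂') :
    t₁' = t₁ ∧ (t₂' : ℤ) = p * t₂ + (1 - p) * t₁ := by
  have : FiniteDimensional K M := FiniteDimensional.right ℚ_[p] K M
  have hnormal : Normal K ↥(E₁ ⊔ E₂) := inferInstance
  have : CharZero K := charZero_of_injective_algebraMap (algebraMap ℚ_[p] K).injective
  have : Normal K M := by
    rw [hsup] at hnormal
    exact Normal.of_algEquiv IntermediateField.topEquiv
  have : IsGalois K M := ⟨⟩
  have hdisj := IntermediateField.LinearDisjoint.of_inf_eq_bot hinf
  have hf₁ : Module.finrank ↥E₁ M = p := (hdisj.finrank_left_eq_finrank hsup).trans hd₂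
  have hf₂ : Module.finrank ↥E₂ M = p := (hdisj.finrank_right_eq_finrank hsup).trans hd₁
  have hp := (Fact.out : p.Prime).one_lt
  have h₁ := ramJump_relation hsup htotram ht₁' ht₂' ht₁ hlt.ne (hp.trans_eq hf₂.symm)
  have h₂ := ramJump_relation (sup_comm E₁ E₂ ▸ hsup) htotram ht₂' ht₁' ht₂ hlt.ne'
    (hp.trans_eq hf₁.symm)
  rw [hf₁, min_eq_left (by exact_mod_cast hlt.le)] at h₁
  rw [hf₂, min_eq_right (by exact_mod_cast hlt.le)] at h₂
  have hp0 : (p : ℤ) ≠ 0 := by exact_mod_cast (zero_lt_one.trans hp).ne'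
  have h : (t₁' : ℤ) = t₁ := by
    refine mul_left_cancel₀ hp0 ?_
    linear_combination h₁
  refine ⟨by exact_mod_cast h, ?_⟩
  rw [← h]
  linear_combination h₂
end
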